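/- arXiv:2602.04544 — 6 statements merged into one kernel-verified Lean document; each statement's English description precedes it below -/
import Mathlib

section
/- Fix 𝔻 ∈ {ℝ, ℂ, ℍ} and N ≥ 1, and let 𝔭 denote the set of Hermitian matrices X ∈ M(2N+1,𝔻) (Xᴴ = X) whose trace has vanishing real part. Then: (i) for every n ≥ 1 there is no ℝ-linear map f : ℝⁿ → 𝔭 with f(v)² = ‖v‖² I_{2N+1} for all v ∈ ℝⁿ (so ρ⁽¹⁾(𝔰𝔩(2N+1,𝔻)) = 0); and (ii) there exists an invertible element of 𝔭 (for example the diagonal matrix diag(2N,−1,…,−1)), but every ℝ-linear map f : ℝ² → 𝔭 has some nonzero v ∈ ℝ² with f(v) not invertible (so ρ⁽²⁾(𝔰𝔩(2N+1,𝔻)) = 1). -/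
open Matrix

/-- The `𝔭`-part of `𝔰𝔩(2N+1,ℝ)`: symmetric real matrices with vanishing trace. -/
def pPartR (M : ℕ) (X : Matrix (Fin M) (Fin M) ℝ) : Prop :=
  Xᴴ = X ∧ Matrix.trace X = 0

/-- The `𝔭`-part of `𝔰𝔩(2N+1,ℂ)`: Hermitian complex matrices whose trace has
vanishing real part. -/
def pPartC (M : ℕ) (X : Matrix (Fin M) (Fin M) ℂ) : Prop :=
  Xᴴ = X ∧ (Matrix.trace X).re = 0

/-- The `𝔭`-part of `𝔰𝔩(2N+1,ℍ)`: quaternionic Hermitian matrices whose trace has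
vanishing real part. -/
def pPartH (M : ℕ) (X : Matrix (Fin M) (Fin M) (Quaternion ℝ)) : Prop :=
  Xᴴ = X ∧ (Matrix.trace X).re = 0

open Quaternion

noncomputable def qB {M : ℕ} (X : Matrix (Fin M) (Fin M) (Quaternion ℝ)) (v w : Fin M → Quaternion ℝ) :
    Quaternion ℝ := (v ᵥ* X) ⬝ᵥ star w

noncomputable def qh {M : ℕ} (X : Matrix (Fin M) (Fin M) (Quaternion ℝ)) (v : Fin M → Quaternion ℝ) : ℝ :=
  (qB X v v).re

def qPos {M : ℕ} (X : Matrix (Fin M) (Fin M) (Quaternion ℝ))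
    (P : Submodule (Quaternion ℝ) (Fin M → Quaternion ℝ)) : Prop :=
  ∀ v ∈ P, v ≠ 0 → 0 < qh X v

section
variable {M : ℕ} (X Y : Matrix (Fin M) (Fin M) (Quaternion ℝ)) (u v w : Fin M → Quaternion ℝ)

lemma qB_add_left : qB X (u + v) w = qB X u w + qB X v w := by
  simp [qB, add_vecMul]

lemma qB_add_right : qB X u (v + w) = qB X u v + qB X u w := by
  simp [qB]

lemma qB_smul_left (a : Quaternion ℝ) : qB X (a • v) w = a * qB X v w := by
  simp [qB, smul_vecMul]

lemma qB_star (hX : Xᴴ = X) : star (qB X v w) = qB X w v := by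
  unfold qB
  rw [← star_dotProduct_star, star_star, star_vecMul, hX, dotProduct_mulVec]

lemma qB_zero_left : qB X 0 w = 0 := by
  simp [qB]

lemma qh_neg : qh (-X) v = - qh X v := by
  simp [qh, qB, vecMul_neg]

lemma qh_comb (a b : ℝ) : qh (a • X + b • Y) v = a * qh X v + b * qh Y v := by
  simp [qh, qB, vecMul_add, vecMul_smul]

end

lemma idem_trace {M : ℕ} (E : Matrix (Fin M) (Fin M) (Quaternion ℝ)) (hE : E * E = E) :
    ∃ k : ℕ, (trace E).re = k := by
  let W := Submodule.span (Quaternion ℝ) (Set.range E)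
  let b := Module.finBasis (Quaternion ℝ) W
  refine ⟨Module.finrank (Quaternion ℝ) W, ?_⟩
  let B : Matrix (Fin (Module.finrank (Quaternion ℝ) W)) (Fin M) (Quaternion ℝ) := fun i => (b i : Fin M → Quaternion ℝ)
  let A : Matrix (Fin M) (Fin (Module.finrank (Quaternion ℝ) W)) (Quaternion ℝ) :=
    fun i j => b.repr ⟨E i, Submodule.subset_span ⟨i, rfl⟩⟩ j
  have h1 : E = A * B := by
    ext1 i j
    have := congrArg (fun x : W => (x : Fin M → Quaternion ℝ) j) (b.sum_repr ⟨E i, Submodule.subset_span ⟨i, rfl⟩⟩)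
    simp only [Submodule.coe_sum, Finset.sum_apply, Submodule.coe_smul, Pi.smul_apply, smul_eq_mul] at this
    rw [← this]
    rfl
  have h2 : B * E = B := by
    have key : ∀ w ∈ W, w ᵥ* E = w := by
      intro w hw
      induction hw using Submodule.span_induction with
      | mem x hx =>
        obtain ⟨i, rfl⟩ := hx
        have := congrFun hE i
        rwa [Matrix.mul_apply_eq_vecMul] at this
      | zero => simp
      | add x y _ _ hx hy => rw [add_vecMul, hx, hy]
      | smul a x _ hx => rw [smul_vecMul, hx]
    ext1 i
    rw [Matrix.mul_apply_eq_vecMul]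
    exact congrFun (key _ (b i).2)
  have h3 : B * A = 1 := by
    have h4 : (B * A - 1) * B = 0 := by
      rw [Matrix.sub_mul, Matrix.mul_assoc, ← h1, h2, Matrix.one_mul, sub_self]
    have hli : LinearIndependent (Quaternion ℝ) B := by
      have := b.linearIndependent.map' W.subtype (Submodule.ker_subtype _)
      exact this
    rw [Fintype.linearIndependent_iff] at hli
    rw [← sub_eq_zero]
    ext1 i
    intro j
    refine hli (fun j => (B * A - 1 : Matrix _ _ (Quaternion ℝ)) i j) ?_ j
    have := congrFun h4 i
    rw [Matrix.mul_apply_eq_vecMul, Matrix.vecMul_eq_sum] at this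
    exact this
  have h5 : (trace (A * B)).re = (trace (B * A)).re := by
    simp only [trace, diag_apply, mul_apply]
    have hre : ∀ (ι : Type) [Fintype ι] (g : ι → Quaternion ℝ), (∑ i, g i).re = ∑ i, (g i).re := by
      intro ι _ g
      exact map_sum (QuaternionAlgebra.reₗ (R := ℝ) (-1) 0 (-1)) g Finset.univ
    simp only [hre]
    rw [Finset.sum_comm]
    refine Finset.sum_congr rfl fun i _ => Finset.sum_congr rfl fun j _ => ?_
    simp
    ring
  rw [h1, h5, h3]
  simp

lemma sylvester {M : ℕ} (X : Matrix (Fin M) (Fin M) (Quaternion ℝ)) (hX : Xᴴ = X) (hu : IsUnit X) :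
    ∃ P Q : Submodule (Quaternion ℝ) (Fin M → Quaternion ℝ), qPos X P ∧ qPos (-X) Q ∧
      Module.finrank (Quaternion ℝ) P + Module.finrank (Quaternion ℝ) Q = M := by
  obtain ⟨P, hP, hmax⟩ := set_has_maximal_iff_noetherian.2
    (inferInstance : IsNoetherian (Quaternion ℝ) (Fin M → Quaternion ℝ)) {P | qPos X P}
    ⟨⊥, fun v hv h => absurd ((Submodule.mem_bot _).1 hv) h⟩
  change qPos X P at hP
  let b := Module.finBasis (Quaternion ℝ) P
  let L : (Fin M → Quaternion ℝ) →ₗ[Quaternion ℝ] (Fin (Module.finrank (Quaternion ℝ) P) → Quaternion ℝ) :=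
    { toFun := fun w i => qB X w (b i)
      map_add' := fun x y => by ext1 i; simp [qB_add_left]
      map_smul' := fun a x => by ext1 i; simp [qB_smul_left] }
  let Q := LinearMap.ker L
  have hQ : ∀ w ∈ Q, ∀ v ∈ P, qB X v w = 0 := by
    intro w hw v hv
    have h1 : ∀ i, qB X (b i) w = 0 := by
      intro i
      rw [← qB_star X _ _ hX]
      have : L w i = 0 := by rw [LinearMap.mem_ker.1 hw]; rfl
      change qB X w (b i) = 0 at this
      rw [this, star_zero]
    let F : (Fin M → Quaternion ℝ) →ₗ[Quaternion ℝ] Quaternion ℝ :=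
      { toFun := fun v => qB X v w
        map_add' := fun x y => qB_add_left _ _ _ _
        map_smul' := fun a x => qB_smul_left _ _ _ _ }
    have h2 : F ∘ₗ P.subtype = 0 := b.ext fun i => h1 i
    exact LinearMap.congr_fun h2 ⟨v, hv⟩
  have hQ' : ∀ w ∈ Q, ∀ v ∈ P, qB X w v = 0 := by
    intro w hw v hv
    rw [← qB_star X _ _ hX, hQ w hw v hv, star_zero]
  have hdisj : P ⊓ Q = ⊥ := by
    rw [eq_bot_iff]
    rintro v ⟨h1, h2⟩
    by_contra h
    have := hP v h1 h
    rw [qh, hQ v h2 v h1] at this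
    simp at this
  have hdim : Module.finrank (Quaternion ℝ) P + Module.finrank (Quaternion ℝ) Q ≥ M := by
    have h1 := L.finrank_range_add_finrank_ker
    have h2 := Submodule.finrank_le (LinearMap.range L)
    simp only [Module.finrank_fin_fun] at h1 h2
    change _ + Module.finrank _ Q = M at h1
    omega
  have hsum := Submodule.finrank_sup_add_finrank_inf_eq P Q
  rw [hdisj, finrank_bot] at hsum
  have hle := Submodule.finrank_le (P ⊔ Q)
  rw [Module.finrank_fin_fun] at hle
  have htop : P ⊔ Q = ⊤ := by
    apply Submodule.eq_top_of_finrank_eq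
    rw [Module.finrank_fin_fun]
    omega
  have hself : ∀ w, qB X w w = ((qh X w : ℝ) : Quaternion ℝ) := by
    intro w
    exact Quaternion.star_eq_self.1 (qB_star X w w hX)
  have hsmul : ∀ (a : Quaternion ℝ) w, qh X (a • w) = normSq a * qh X w := by
    intro a w
    have : qB X (a • w) (a • w) = ((normSq a * qh X w : ℝ) : Quaternion ℝ) := by
      rw [qB_smul_left, ← qB_star X _ _ hX, qB_smul_left, hself, star_mul, Quaternion.star_coe,
        Quaternion.coe_commutes, ← mul_assoc, Quaternion.self_mul_star, Quaternion.coe_mul]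
    rw [qh, this, Quaternion.re_coe]
  have hnonpos : ∀ w ∈ Q, qh X w ≤ 0 := by
    intro w hw
    by_contra! hc
    have hw0 : w ≠ 0 := by
      rintro rfl
      simp [qh, qB_zero_left] at hc
    refine hmax (P ⊔ Submodule.span _ {w}) ?_ ?_
    · intro v hv hv0
      obtain ⟨p, hp, q, hq, rfl⟩ := Submodule.mem_sup.1 hv
      obtain ⟨a, rfl⟩ := Submodule.mem_span_singleton.1 hq
      have haw : a • w ∈ Q := Q.smul_mem a hw
      have : qh X (p + a • w) = qh X p + normSq a * qh X w := by
        rw [← hsmul]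
        simp [qh, qB_add_left, qB_add_right, hQ _ haw _ hp, hQ' _ haw _ hp]
      rw [this]
      by_cases hp0 : p = 0
      · subst hp0
        have ha : a ≠ 0 := by
          rintro rfl
          simp at hv0
        have : 0 < normSq a := lt_of_le_of_ne Quaternion.normSq_nonneg (fun h => ha (Quaternion.normSq_eq_zero.1 h.symm))
        have h0 : qh X 0 = 0 := by simp [qh, qB_zero_left]
        rw [h0]
        positivity
      · have := hP p hp hp0
        have : 0 ≤ normSq a := Quaternion.normSq_nonneg
        positivity
    · refine lt_of_le_of_ne le_sup_left fun h => hw0 ?_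
      have : w ∈ P := by
        rw [h]
        exact Submodule.mem_sup_right (Submodule.mem_span_singleton_self w)
      have : w ∈ P ⊓ Q := ⟨this, hw⟩
      rw [hdisj] at this
      exact (Submodule.mem_bot _).1 this
  refine ⟨P, Q, hP, ?_, by omega⟩
  intro w hw hw0
  rw [qh_neg]
  by_contra! hc
  have hw1 : qh X w = 0 := le_antisymm (hnonpos w hw) (by linarith)
  have hwQ : ∀ u ∈ Q, qB X w u = 0 := by
    intro u hu
    by_contra hne
    have hpos : 0 < normSq (qB X w u) :=
      lt_of_le_of_ne Quaternion.normSq_nonneg (fun h => hne (Quaternion.normSq_eq_zero.1 h.symm))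
    have key : ∀ s : ℝ, qh X u + 2 * s * normSq (qB X w u) ≤ 0 := by
      intro s
      let a : Quaternion ℝ := (s : Quaternion ℝ) * star (qB X w u)
      have h1 := hnonpos (u + a • w) (Q.add_mem hu (Q.smul_mem a hw))
      have h2 : qB X (a • w) u = ((s * normSq (qB X w u) : ℝ) : Quaternion ℝ) := by
        rw [qB_smul_left, mul_assoc, Quaternion.star_mul_self, Quaternion.coe_mul]
      have h3 : qB X u (a • w) = ((s * normSq (qB X w u) : ℝ) : Quaternion ℝ) := by
        rw [← qB_star X _ _ hX, h2, Quaternion.star_coe]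
      have h4 : qh X (u + a • w) = qh X u + 2 * s * normSq (qB X w u) + qh X (a • w) := by
        simp only [qh, qB_add_left, qB_add_right, h2, h3, Quaternion.re_add, Quaternion.re_coe]
        ring
      rw [h4, hsmul, hw1] at h1
      linarith
    have := key ((1 - qh X u) / (2 * normSq (qB X w u)))
    have e : 2 * ((1 - qh X u) / (2 * normSq (qB X w u))) * normSq (qB X w u) = 1 - qh X u := by
      field_simp
    linarith
  have hall : ∀ u, qB X w u = 0 := by
    intro u
    have : u ∈ P ⊔ Q := by rw [htop]; trivial
    obtain ⟨p, hp, q, hq, rfl⟩ := Submodule.mem_sup.1 this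
    rw [qB_add_right, hQ' w hw p hp, hwQ q hq, add_zero]
  have hwX : w ᵥ* X = 0 := by
    funext j
    have := hall (Pi.single j 1)
    rw [qB] at this
    simpa [dotProduct, Pi.single_apply, apply_ite star] using this
  apply hw0
  obtain ⟨U, rfl⟩ := hu
  have : (w ᵥ* (U : Matrix (Fin M) (Fin M) (Quaternion ℝ))) ᵥ* ((U⁻¹ : (Matrix (Fin M) (Fin M) (Quaternion ℝ))ˣ) : Matrix (Fin M) (Fin M) (Quaternion ℝ)) = w := by
    rw [vecMul_vecMul, Units.mul_inv, vecMul_one]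
  rw [← this, hwX, zero_vecMul]

lemma qPos_open {M : ℕ} (A B : Matrix (Fin M) (Fin M) (Quaternion ℝ)) (θ : ℝ)
    (P : Submodule (Quaternion ℝ) (Fin M → Quaternion ℝ))
    (hP : qPos (Real.cos θ • A + Real.sin θ • B) P) :
    ∀ᶠ t in nhds θ, qPos (Real.cos t • A + Real.sin t • B) P := by
  let P' : Submodule ℝ (Fin M → Quaternion ℝ) := P.restrictScalars ℝ
  have hcl : IsClosed (P : Set (Fin M → Quaternion ℝ)) := P'.closed_of_finiteDimensional
  have hK : IsCompact (Metric.sphere (0 : Fin M → Quaternion ℝ) 1 ∩ (P : Set _)) := by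
    have : ProperSpace (Fin M → Quaternion ℝ) := FiniteDimensional.proper ℝ _
    exact (isCompact_sphere _ _).inter_right hcl
  have hcont : ∀ X : Matrix (Fin M) (Fin M) (Quaternion ℝ), Continuous (qh X) := by
    intro X
    unfold qh qB
    refine Quaternion.continuous_re.comp ?_
    simp only [dotProduct, vecMul, Pi.star_apply]
    fun_prop
  have hF : Continuous fun p : ℝ × (Fin M → Quaternion ℝ) => Real.cos p.1 * qh A p.2 + Real.sin p.1 * qh B p.2 := by
    have := hcont A
    have := hcont B
    fun_prop
  have := hK.eventually_forall_of_forall_eventually (x₀ := θ)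
    (P := fun t v => 0 < Real.cos t * qh A v + Real.sin t * qh B v) (by
      rintro v ⟨hv, hvP⟩
      have h0 : v ≠ 0 := by
        rintro rfl
        simp at hv
      have h1 := hP v hvP h0
      rw [qh_comb] at h1
      exact (hF.tendsto (θ, v)).eventually (lt_mem_nhds h1))
  filter_upwards [this] with t ht v hv hv0
  have hn : ‖v‖ ≠ 0 := norm_ne_zero_iff.2 hv0
  have h1 := ht (‖v‖⁻¹ • v) ⟨by simp [norm_smul, hn], P'.smul_mem _ hv⟩
  have hs : ∀ X : Matrix (Fin M) (Fin M) (Quaternion ℝ), qh X (‖v‖⁻¹ • v) = ‖v‖⁻¹ ^ 2 * qh X v := by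
    intro X
    have e : star (‖v‖⁻¹ • v) = ‖v‖⁻¹ • star v := by
      funext i
      simp [Quaternion.star_smul]
    simp [qh, qB, smul_vecMul, e]
    ring
  rw [hs, hs] at h1
  rw [qh_comb]
  have h2 : 0 < ‖v‖⁻¹ ^ 2 := by positivity
  by_contra! hc
  nlinarith [mul_nonneg h2.le (neg_nonneg.2 hc)]

lemma qPos_disj {M : ℕ} (X : Matrix (Fin M) (Fin M) (Quaternion ℝ))
    (P Q : Submodule (Quaternion ℝ) (Fin M → Quaternion ℝ)) (hP : qPos X P) (hQ : qPos (-X) Q) :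
    Module.finrank (Quaternion ℝ) P + Module.finrank (Quaternion ℝ) Q ≤ M := by
  have hdisj : P ⊓ Q = ⊥ := by
    rw [eq_bot_iff]
    rintro v ⟨h1, h2⟩
    by_contra h
    have := hP v h1 h
    have := hQ v h2 h
    rw [qh_neg] at this
    linarith
  have hsum := Submodule.finrank_sup_add_finrank_inf_eq P Q
  rw [hdisj, finrank_bot] at hsum
  have hle := Submodule.finrank_le (P ⊔ Q)
  rw [Module.finrank_fin_fun] at hle
  omega

lemma no_path {M : ℕ} (A B : Matrix (Fin M) (Fin M) (Quaternion ℝ)) (hA : Aᴴ = A) (hB : Bᴴ = B)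
    (hu : ∀ θ : ℝ, IsUnit (Real.cos θ • A + Real.sin θ • B)) : Even M := by
  have hH : ∀ θ : ℝ, (Real.cos θ • A + Real.sin θ • B)ᴴ = Real.cos θ • A + Real.sin θ • B := by
    intro θ
    have e : ∀ (r : ℝ) (Y : Matrix (Fin M) (Fin M) (Quaternion ℝ)), (r • Y)ᴴ = r • Yᴴ := by
      intro r Y
      ext1 i j
      simp [Quaternion.star_smul]
    rw [conjTranspose_add, e, e, hA, hB]
  choose P Q hP hQ hPQ using fun θ => sylvester _ (hH θ) (hu θ)
  have hloc : IsLocallyConstant fun θ => Module.finrank (Quaternion ℝ) (P θ) := by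
    rw [IsLocallyConstant.iff_eventually_eq]
    intro θ
    have h1 := qPos_open A B θ (P θ) (hP θ)
    have hneg : ∀ t : ℝ, -(Real.cos t • A + Real.sin t • B) = Real.cos t • (-A) + Real.sin t • (-B) := by
      intro t
      simp only [smul_neg]
      abel
    have h2 := qPos_open (-A) (-B) θ (Q θ) (by rw [← hneg]; exact hQ θ)
    filter_upwards [h1, h2] with t h1 h2
    rw [← hneg] at h2
    have := qPos_disj _ _ _ h1 (hQ t)
    have := qPos_disj _ _ _ (hP t) h2
    have := hPQ t
    have := hPQ θ
    omega
  have hc : Module.finrank (Quaternion ℝ) (P 0) = Module.finrank (Quaternion ℝ) (P Real.pi) :=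
    hloc.apply_eq_of_preconnectedSpace 0 Real.pi
  have p0 := hP 0
  have q0 := hQ 0
  have p1 := hP Real.pi
  have q1 := hQ Real.pi
  simp only [Real.cos_zero, Real.sin_zero, Real.cos_pi, Real.sin_pi, one_smul, zero_smul, add_zero, neg_smul, neg_neg] at p0 q0 p1 q1
  have := qPos_disj _ _ _ p0 p1
  have := qPos_disj _ _ _ q1 (by simpa using q0)
  have := hPQ 0
  have := hPQ Real.pi
  exact ⟨Module.finrank (Quaternion ℝ) (P 0), by omega⟩

lemma part1H (M : ℕ) (hM : Odd M) (n : ℕ) (hn : 1 ≤ n)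
    (f : EuclideanSpace ℝ (Fin n) →ₗ[ℝ] Matrix (Fin M) (Fin M) (Quaternion ℝ))
    (h : ∀ v, pPartH M (f v))
    (h2 : ∀ v, (f v) ^ 2 = (‖v‖ ^ 2 : ℝ) • (1 : Matrix (Fin M) (Fin M) (Quaternion ℝ))) : False := by
  set X := f (EuclideanSpace.single ⟨0, hn⟩ 1) with hX
  have h3 : X * X = 1 := by
    have := h2 (EuclideanSpace.single ⟨0, hn⟩ 1)
    simpa [pow_two] using this
  obtain ⟨k, hk⟩ := idem_trace ((1 / 2 : ℝ) • (1 + X)) (by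
    rw [smul_mul_smul_comm, add_mul, mul_add, mul_add, h3, one_mul, mul_one, one_mul,
      show 1 + X + (X + 1) = (2 : ℝ) • (1 + X) by rw [two_smul]; abel, smul_smul]
    norm_num)
  have h4 : (trace X).re = 0 := (h _).2
  rw [trace_smul, trace_add, Quaternion.re_smul, Quaternion.re_add, h4, trace_one] at hk
  simp at hk
  obtain ⟨m, rfl⟩ := hM
  have : (2 * m + 1 : ℝ) = 2 * k := by
    push_cast at hk
    linarith
  have : 2 * m + 1 = 2 * k := by exact_mod_cast this
  omega

lemma part2H (M : ℕ) (hM : Odd M) (f : EuclideanSpace ℝ (Fin 2) →ₗ[ℝ] Matrix (Fin M) (Fin M) (Quaternion ℝ))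
    (h : ∀ v, pPartH M (f v)) : ∃ v, v ≠ 0 ∧ ¬ IsUnit (f v) := by
  by_contra! hc
  refine (Nat.not_even_iff_odd.2 hM) (no_path (f (EuclideanSpace.single 0 1)) (f (EuclideanSpace.single 1 1)) (h _).1 (h _).1 ?_)
  intro θ
  rw [← map_smul, ← map_smul, ← map_add]
  apply hc
  intro h0
  have e0 := congrArg (fun v : EuclideanSpace ℝ (Fin 2) => v 0) h0
  have e1 := congrArg (fun v : EuclideanSpace ℝ (Fin 2) => v 1) h0
  simp at e0 e1
  have := Real.sin_sq_add_cos_sq θ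
  rw [e0, e1] at this
  norm_num at this

lemma existsR (N : ℕ) (hN : 1 ≤ N) : ∃ X : Matrix (Fin (2 * N + 1)) (Fin (2 * N + 1)) ℝ,
    pPartR (2 * N + 1) X ∧ IsUnit X := by
  refine ⟨diagonal (Fin.cons (2 * N : ℝ) fun _ => -1), ⟨?_, ?_⟩, ?_⟩
  · simp
  · rw [trace_diagonal, Fin.sum_univ_succ]
    simp
  · rw [Matrix.isUnit_iff_isUnit_det, det_diagonal, Fin.prod_univ_succ]
    simp
    omega

/-- transfer -/
lemma transfer {D : Type} [Ring D] [StarRing D] [Algebra ℝ D] (φ : D →ₐ[ℝ] Quaternion ℝ)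
    (hs : ∀ x, φ (star x) = star (φ x)) (M : ℕ) (hM : Odd M)
    (p : Matrix (Fin M) (Fin M) D → Prop) (hp : ∀ X, p X → Xᴴ = X ∧ (φ (trace X)).re = 0) :
    (∀ n, 1 ≤ n →
        ¬ ∃ f : EuclideanSpace ℝ (Fin n) →ₗ[ℝ] Matrix (Fin M) (Fin M) D,
          (∀ v, p (f v)) ∧
          ∀ v, (f v) ^ 2 = (‖v‖ ^ 2 : ℝ) • (1 : Matrix (Fin M) (Fin M) D)) ∧
      (∀ f : EuclideanSpace ℝ (Fin 2) →ₗ[ℝ] Matrix (Fin M) (Fin M) D,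
        (∀ v, p (f v)) → ∃ v, v ≠ 0 ∧ ¬ IsUnit (f v)) := by
  have key : ∀ X, p X → pPartH M (φ.mapMatrix X) := by
    intro X hX
    obtain ⟨h1, h2⟩ := hp X hX
    refine ⟨?_, ?_⟩
    · conv_rhs => rw [← h1]
      ext1 i j
      simp [hs]
    · have e : trace (φ.mapMatrix X) = φ (trace X) := by
        rw [AlgHom.mapMatrix_apply, trace, trace, map_sum]
        rfl
      rw [e]
      exact h2
  refine ⟨?_, ?_⟩
  · rintro n hn ⟨f, h1, h2⟩
    refine part1H M hM n hn (φ.mapMatrix.toLinearMap ∘ₗ f) (fun v => key _ (h1 v)) fun v => ?_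
    have := congrArg φ.mapMatrix (h2 v)
    rw [map_pow, map_smul, map_one] at this
    exact this
  · intro f h
    obtain ⟨v, hv, hu⟩ := part2H M hM (φ.mapMatrix.toLinearMap ∘ₗ f) (fun v => key _ (h v))
    exact ⟨v, hv, fun h => hu (h.map φ.mapMatrix)⟩

lemma existsMap {D : Type} [Ring D] [StarRing D] [Algebra ℝ D] (φ : ℝ →ₐ[ℝ] D)
    (hs : ∀ x, star (φ x) = φ x) (N : ℕ) (hN : 1 ≤ N) :
    ∃ X : Matrix (Fin (2 * N + 1)) (Fin (2 * N + 1)) D, (Xᴴ = X ∧ trace X = 0) ∧ IsUnit X := by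
  obtain ⟨X, ⟨h1, h2⟩, h3⟩ := existsR N hN
  refine ⟨φ.mapMatrix X, ⟨?_, ?_⟩, h3.map _⟩
  · conv_rhs => rw [← h1]
    ext1 i j
    simp [hs]
  · rw [AlgHom.mapMatrix_apply, ← map_zero φ, ← h2, trace, trace, map_sum]
    rfl

/-- For `𝔻 ∈ {ℝ,ℂ,ℍ}`: (i) `ρ⁽¹⁾(𝔰𝔩(2N+1,𝔻)) = 0`, i.e. for no `n ≥ 1` is there an
ℝ-linear `f : ℝⁿ → 𝔭` with `f(v)² = ‖v‖² I`; (ii) `ρ⁽²⁾(𝔰𝔩(2N+1,𝔻)) = 1`, i.e. `𝔭`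
contains an invertible element, but every ℝ-linear `f : ℝ² → 𝔭` takes a
non-invertible value at some nonzero `v`. -/
theorem hurwitzRadon_sl_odd (N : ℕ) (hN : 1 ≤ N) :
    -- 𝔻 = ℝ
    ((∀ n, 1 ≤ n →
        ¬ ∃ f : EuclideanSpace ℝ (Fin n) →ₗ[ℝ] Matrix (Fin (2 * N + 1)) (Fin (2 * N + 1)) ℝ,
          (∀ v, pPartR (2 * N + 1) (f v)) ∧
          ∀ v, (f v) ^ 2 = (‖v‖ ^ 2 : ℝ) • (1 : Matrix (Fin (2 * N + 1)) (Fin (2 * N + 1)) ℝ)) ∧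
      (∃ X : Matrix (Fin (2 * N + 1)) (Fin (2 * N + 1)) ℝ, pPartR (2 * N + 1) X ∧ IsUnit X) ∧
      (∀ f : EuclideanSpace ℝ (Fin 2) →ₗ[ℝ] Matrix (Fin (2 * N + 1)) (Fin (2 * N + 1)) ℝ,
        (∀ v, pPartR (2 * N + 1) (f v)) → ∃ v, v ≠ 0 ∧ ¬ IsUnit (f v))) ∧
    -- 𝔻 = ℂ
    ((∀ n, 1 ≤ n →
        ¬ ∃ f : EuclideanSpace ℝ (Fin n) →ₗ[ℝ] Matrix (Fin (2 * N + 1)) (Fin (2 * N + 1)) ℂ,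
          (∀ v, pPartC (2 * N + 1) (f v)) ∧
          ∀ v, (f v) ^ 2 = (‖v‖ ^ 2 : ℝ) • (1 : Matrix (Fin (2 * N + 1)) (Fin (2 * N + 1)) ℂ)) ∧
      (∃ X : Matrix (Fin (2 * N + 1)) (Fin (2 * N + 1)) ℂ, pPartC (2 * N + 1) X ∧ IsUnit X) ∧
      (∀ f : EuclideanSpace ℝ (Fin 2) →ₗ[ℝ] Matrix (Fin (2 * N + 1)) (Fin (2 * N + 1)) ℂ,
        (∀ v, pPartC (2 * N + 1) (f v)) → ∃ v, v ≠ 0 ∧ ¬ IsUnit (f v))) ∧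
    -- 𝔻 = ℍ
    ((∀ n, 1 ≤ n →
        ¬ ∃ f : EuclideanSpace ℝ (Fin n) →ₗ[ℝ]
            Matrix (Fin (2 * N + 1)) (Fin (2 * N + 1)) (Quaternion ℝ),
          (∀ v, pPartH (2 * N + 1) (f v)) ∧
          ∀ v, (f v) ^ 2 =
            (‖v‖ ^ 2 : ℝ) • (1 : Matrix (Fin (2 * N + 1)) (Fin (2 * N + 1)) (Quaternion ℝ))) ∧
      (∃ X : Matrix (Fin (2 * N + 1)) (Fin (2 * N + 1)) (Quaternion ℝ),
        pPartH (2 * N + 1) X ∧ IsUnit X) ∧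
      (∀ f : EuclideanSpace ℝ (Fin 2) →ₗ[ℝ]
          Matrix (Fin (2 * N + 1)) (Fin (2 * N + 1)) (Quaternion ℝ),
        (∀ v, pPartH (2 * N + 1) (f v)) → ∃ v, v ≠ 0 ∧ ¬ IsUnit (f v))) := by
  have hM : Odd (2 * N + 1) := ⟨N, rfl⟩
  have hR := transfer (Algebra.ofId ℝ (Quaternion ℝ)) (fun x => by simp [Algebra.ofId_apply, Quaternion.algebraMap_def])
    (2 * N + 1) hM (pPartR (2 * N + 1)) (fun X h => ⟨h.1, by rw [h.2]; simp⟩)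
  have hC := transfer Quaternion.ofComplex (fun x => by ext <;> simp)
    (2 * N + 1) hM (pPartC (2 * N + 1)) (fun X h => ⟨h.1, by simpa using h.2⟩)
  refine ⟨⟨hR.1, existsR N hN, hR.2⟩, ⟨hC.1, ?_, hC.2⟩, ?_, ?_, ?_⟩
  · obtain ⟨X, ⟨h1, h2⟩, h3⟩ := existsMap (Algebra.ofId ℝ ℂ) (fun x => by simp [Algebra.ofId_apply]) N hN
    exact ⟨X, ⟨h1, by simp [h2]⟩, h3⟩
  · rintro n hn ⟨f, h1, h2⟩
    exact part1H _ hM n hn f h1 h2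
  · obtain ⟨X, ⟨h1, h2⟩, h3⟩ := existsMap (Algebra.ofId ℝ (Quaternion ℝ))
      (fun x => by simp [Algebra.ofId_apply, Quaternion.algebraMap_def]) N hN
    exact ⟨X, ⟨h1, by simp [h2]⟩, h3⟩
  · exact part2H _ hM
end

section
/- Let A be a finite-dimensional associative unital ℝ-algebra and let a, b ∈ A. If the element 1 ⊗ a + i ⊗ b is invertible in the complexification ℂ ⊗_ℝ A, then there exists a real number r such that a + r·b is invertible in A. -/
open TensorProduct

/-- If `1 ⊗ a + i ⊗ b` is invertible in the complexification `ℂ ⊗[ℝ] A` of a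
finite-dimensional ℝ-algebra `A`, then `a + r·b` is invertible in `A` for some
real number `r`. -/
theorem exists_real_invertible_combination
    (A : Type*) [Ring A] [Algebra ℝ A] [FiniteDimensional ℝ A] (a b : A)
    (h : IsUnit ((1 : ℂ) ⊗ₜ[ℝ] a + Complex.I ⊗ₜ[ℝ] b : ℂ ⊗[ℝ] A)) :
    ∃ r : ℝ, IsUnit (a + r • b) := by
  classical
  let B := Module.finBasis ℝ A
  let L := Algebra.leftMulMatrix B
  let g : A →ₐ[ℝ] Matrix (Fin (Module.finrank ℝ A)) (Fin (Module.finrank ℝ A)) ℂ :=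
    (AlgHom.mapMatrix (Algebra.ofId ℝ ℂ)).comp L
  let F : ℂ ⊗[ℝ] A →ₐ[ℂ] Matrix (Fin (Module.finrank ℝ A)) (Fin (Module.finrank ℝ A)) ℂ :=
    Algebra.TensorProduct.lift (Algebra.ofId ℂ _) g (fun x y => Algebra.commutes x _)
  have h1 := h.map F
  have h2 : F ((1 : ℂ) ⊗ₜ[ℝ] a + Complex.I ⊗ₜ[ℝ] b) = g a + Complex.I • g b := by
    have hF : ∀ (z : ℂ) (x : A), F (z ⊗ₜ[ℝ] x) = z • g x := by
      intro z x
      rw [Algebra.smul_def]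
      exact Algebra.TensorProduct.lift_tmul _ _ _ _ _
    rw [map_add, hF, hF, one_smul]
  rw [h2, Matrix.isUnit_iff_isUnit_det, isUnit_iff_ne_zero] at h1
  let M := (L a).map Polynomial.C + (Polynomial.X : Polynomial ℝ) • (L b).map Polynomial.C
  have h3 : Polynomial.aeval Complex.I M.det = (g a + Complex.I • g b).det := by
    rw [AlgHom.map_det]
    congr 1
    ext i j
    simp [M, g, Algebra.ofId_apply]
    exact mul_comm _ _
  have h4 : M.det ≠ 0 := by
    intro h0
    rw [h0, map_zero] at h3
    exact h1 h3.symm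
  obtain ⟨r, hr⟩ : ∃ r, M.det.eval r ≠ 0 := by
    by_contra! hc
    exact h4 (Polynomial.funext (by simpa using hc))
  have h5 : M.det.eval r = (L (a + r • b)).det := by
    rw [← Polynomial.coe_evalRingHom, RingHom.map_det]
    congr 1
    ext i j
    simp [M]
    exact mul_comm _ _
  rw [h5] at hr
  have h6 : IsUnit (Algebra.lmul ℝ A (a + r • b)) := by
    rw [LinearMap.isUnit_iff_isUnit_det, ← Algebra.norm_apply, Algebra.norm_eq_matrix_det B]
    exact isUnit_iff_ne_zero.mpr hr
  rw [Module.End.isUnit_iff] at h6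
  obtain ⟨y, hy⟩ := h6.2 1
  have hy' : (a + r • b) * y = 1 := hy
  refine ⟨r, ⟨⟨a + r • b, y, hy', h6.1 ?_⟩, rfl⟩⟩
  change (a + r • b) * (y * (a + r • b)) = (a + r • b) * 1
  rw [← mul_assoc, hy', one_mul, mul_one]
end

section
/- Let A be a finite-dimensional central simple algebra over ℂ and let σ : A → A be a ℂ-linear anti-involution, i.e. a ℂ-linear map with σ∘σ = id and σ(xy) = σ(y)σ(x) for all x, y ∈ A. If a ∈ A is invertible and σ(a) = a, then there exists b ∈ A with a = σ(b)·b. -/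
open Polynomial in
theorem exists_sq_of_isUnit_aux {S : Type*} [CommRing S] [Algebra ℂ S] [FiniteDimensional ℂ S]
    (a : S) (ha : IsUnit a) : ∃ b : S, b ^ 2 = a := by
  classical
  have hint : IsIntegral ℂ a := Algebra.IsIntegral.isIntegral a
  set m := minpoly ℂ a with hm
  choose r hr using fun z : ℂ => IsAlgClosed.exists_pow_nat_eq z (n := 2) (by norm_num)
  let p : ℂ[X] := Lagrange.interpolate m.roots.toFinset id r
  have hp : ∀ z ∈ m.roots, eval z p = r z := fun z hz =>
    Lagrange.eval_interpolate_at_node (v := id) r (Function.injective_id.injOn)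
      (Multiset.mem_toFinset.2 hz)
  have hdvd : m ∣ (p ^ 2 - X) ^ (Multiset.card m.roots) := by
    have hs := (IsAlgClosed.splits m).eq_prod_roots_of_monic (minpoly.monic hint)
    have h2 : (m.roots.map (fun z => X - C z)).prod ∣
        (m.roots.map (fun _ => p ^ 2 - X)).prod := by
      apply Multiset.prod_dvd_prod_of_dvd
      intro z hz
      rw [dvd_iff_isRoot]
      simp [hp z hz, hr]
    rw [← hs] at h2
    simpa using h2
  have hnil : IsNilpotent ((aeval a p) ^ 2 - a) := by
    refine ⟨Multiset.card m.roots, ?_⟩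
    obtain ⟨q, hq⟩ := hdvd
    have := congrArg (aeval a) hq
    simpa [hm, minpoly.aeval] using this
  have hu : IsUnit ((aeval a p) ^ 2) := by
    have := hnil.isUnit_add_left_of_commute ha (Commute.all _ _)
    simpa using this
  have hu' : IsUnit (aeval a p) := (isUnit_pow_iff two_ne_zero).1 hu
  have h2 : IsUnit (2 : S) := by
    have := (IsUnit.mk0 (2 : ℂ) two_ne_zero).map (algebraMap ℂ S)
    rwa [map_ofNat] at this
  obtain ⟨b, ⟨-, hb⟩, -⟩ := existsUnique_nilpotent_sub_and_aeval_eq_zero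
    (P := (X ^ 2 - C a : S[X])) (x := aeval a p) (by simpa using hnil)
    (by simpa [one_add_one_eq_two] using h2.mul hu')
  exact ⟨b, by simpa [sub_eq_zero] using hb⟩


/-- Let `A` be a finite-dimensional central simple ℂ-algebra and `σ` a ℂ-linear
anti-involution of `A`. Every `σ`-fixed invertible element `a` is of the form
`a = σ(b)·b`. -/
theorem eq_antiInvolution_mul_self_of_fixed
    (A : Type*) [Ring A] [Algebra ℂ A] [FiniteDimensional ℂ A]
    [Algebra.IsCentral ℂ A] [IsSimpleRing A]
    (σ : A →ₗ[ℂ] A)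
    (hinv : ∀ x, σ (σ x) = x)
    (hanti : ∀ x y, σ (x * y) = σ y * σ x)
    (a : A) (ha : IsUnit a) (hfix : σ a = a) :
    ∃ b : A, a = σ b * b := by

  have hone : σ 1 = 1 := by
    have h := hanti (σ 1) 1
    rw [mul_one, hinv, mul_one] at h
    exact h.symm
  let S := Algebra.adjoin ℂ {a}
  letI : CommRing S := Algebra.adjoinCommRingOfComm ℂ (s := {a}) (by
    rintro x hx y hy
    rw [Set.mem_singleton_iff.1 hx, Set.mem_singleton_iff.1 hy])
  have hS : ∀ x ∈ S, σ x = x := by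
    have hle : ∀ x ∈ S, ∃ p : Polynomial ℂ, Polynomial.aeval a p = x := by
      intro x hx
      simpa [S, Algebra.adjoin_singleton_eq_range_aeval] using hx
    have hpow : ∀ n : ℕ, σ (a ^ n) = a ^ n := by
      intro n
      induction n with
      | zero => simpa using hone
      | succ n ih => rw [pow_succ, hanti, ih, hfix, ← pow_succ', pow_succ]
    intro x hx
    obtain ⟨p, rfl⟩ := hle x hx
    rw [Polynomial.aeval_eq_sum_range]
    simp [hpow]
  let a' : S := ⟨a, Algebra.self_mem_adjoin_singleton ℂ a⟩
  haveI : FiniteDimensional ℂ S := FiniteDimensional.finiteDimensional_subalgebra S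
  have ha' : IsUnit a' := by
    rw [IsArtinianRing.isUnit_iff_nonZeroDivisor_of_isIntegral' (R := ℂ), mem_nonZeroDivisors_iff_right]
    intro x hx
    have h : (x : A) * a = 0 := congrArg Subtype.val hx
    exact Subtype.ext (ha.mul_left_eq_zero.1 h)
  obtain ⟨b, hb⟩ := exists_sq_of_isUnit_aux a' ha'
  refine ⟨b, ?_⟩
  rw [hS b b.2]
  have h := congrArg Subtype.val hb
  rw [pow_two] at h
  exact h.symm
end

section
/- Let A be a finite-dimensional central simple algebra over ℝ and let σ be a ℂ-linear anti-involution of the complexification A_ℂ := ℂ ⊗_ℝ A (a ℂ-linear map with σ∘σ = id and σ(xy) = σ(y)σ(x)). Then there exists an ℝ-linear anti-involution σ' of A such that: (1) σ is equivalent to the ℂ-linear extension σ'_ℂ of σ', i.e. there is an invertible g ∈ A_ℂ with σ(x) = g⁻¹·σ'_ℂ(g x g⁻¹)·g for all x ∈ A_ℂ; and (2) every element x of A (viewed inside A_ℂ) that is invertible and satisfies σ(x)·x = 1 also satisfies σ'(x)·x = 1. -/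
open TensorProduct

namespace DescendAux

noncomputable def reA (A : Type*) [Ring A] [Algebra ℝ A] : (ℂ ⊗[ℝ] A) →ₗ[ℝ] A :=
  (TensorProduct.lid ℝ A).toLinearMap ∘ₗ LinearMap.rTensor A Complex.reLm

noncomputable def imA (A : Type*) [Ring A] [Algebra ℝ A] : (ℂ ⊗[ℝ] A) →ₗ[ℝ] A :=
  (TensorProduct.lid ℝ A).toLinearMap ∘ₗ LinearMap.rTensor A Complex.imLm

section
variable {A : Type*} [Ring A] [Algebra ℝ A]

@[simp] lemma reA_tmul (c : ℂ) (a : A) : reA A (c ⊗ₜ a) = c.re • a := by simp [reA]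
@[simp] lemma imA_tmul (c : ℂ) (a : A) : imA A (c ⊗ₜ a) = c.im • a := by simp [imA]

lemma decomp (z : ℂ ⊗[ℝ] A) :
    z = (1 : ℂ) ⊗ₜ[ℝ] reA A z + Complex.I ⊗ₜ[ℝ] imA A z := by
  induction z with
  | zero => simp
  | tmul c a =>
    simp only [reA_tmul, imA_tmul, ← TensorProduct.smul_tmul, ← TensorProduct.add_tmul]
    congr 1
    apply Complex.ext <;> simp
  | add x y hx hy =>
    rw [map_add, map_add, TensorProduct.tmul_add, TensorProduct.tmul_add]
    nth_rw 1 [hx, hy]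
    abel

lemma reA_left (x : A) (z : ℂ ⊗[ℝ] A) :
    reA A (((1 : ℂ) ⊗ₜ[ℝ] x) * z) = x * reA A z := by
  induction z with
  | zero => simp
  | tmul c a => simp
  | add y z hy hz => simp [mul_add, hy, hz]

lemma reA_right (x : A) (z : ℂ ⊗[ℝ] A) :
    reA A (z * ((1 : ℂ) ⊗ₜ[ℝ] x)) = reA A z * x := by
  induction z with
  | zero => simp
  | tmul c a => simp
  | add y z hy hz => simp [add_mul, hy, hz]

lemma reA_I (z : ℂ ⊗[ℝ] A) :
    reA A ((Complex.I ⊗ₜ[ℝ] (1 : A)) * z) = - imA A z := by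
  induction z with
  | zero => simp
  | tmul c a => simp
  | add y z hy hz => simp [mul_add, hy, hz]; abel

/-- The complexification of a central simple algebra is simple. -/
lemma simple_complexification [Algebra.IsCentral ℝ A] [IsSimpleRing A] :
    IsSimpleRing (ℂ ⊗[ℝ] A) := by
  have key1 : ∀ (I : TwoSidedIdeal (ℂ ⊗[ℝ] A)) (c : A), c ≠ 0 → (1 : ℂ) ⊗ₜ[ℝ] c ∈ I →
      (1 : ℂ ⊗[ℝ] A) ∈ I := by
    intro I c hc hcI
    let J : TwoSidedIdeal A := TwoSidedIdeal.mk' {a | (1 : ℂ) ⊗ₜ[ℝ] a ∈ I}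
      (by simp)
      (fun {x y} hx hy => by
        simpa [TensorProduct.tmul_add] using I.add_mem hx hy)
      (fun {x} hx => by
        simpa [TensorProduct.tmul_neg] using I.neg_mem hx)
      (fun {x y} hy => by
        simpa using I.mul_mem_left ((1 : ℂ) ⊗ₜ[ℝ] x) _ hy)
      (fun {x y} hy => by
        simpa using I.mul_mem_right _ ((1 : ℂ) ⊗ₜ[ℝ] y) hy)
    have h1 : (1 : A) ∈ J := IsSimpleRing.one_mem_of_ne_zero_mem J hc
      (by simpa [J, TwoSidedIdeal.mem_mk'] using hcI)
    simpa [J, TwoSidedIdeal.mem_mk', Algebra.TensorProduct.one_def] using h1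
  have nt : Nontrivial (ℂ ⊗[ℝ] A) := by
    refine ⟨⟨0, 1, fun h => ?_⟩⟩
    have := congrArg (reA A) h
    simp [Algebra.TensorProduct.one_def] at this
  refine IsSimpleRing.of_eq_bot_or_eq_top fun I => ?_
  rw [or_iff_not_imp_left, ← I.one_mem_iff]
  intro hI
  obtain ⟨z, hz, hz0⟩ := SetLike.exists_of_lt (bot_lt_iff_ne_bot.mpr hI : ⊥ < I)
  replace hz0 : z ≠ 0 := hz0
  obtain ⟨w, hw, hw0⟩ : ∃ w ∈ I, reA A w ≠ 0 := by
    by_contra! H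
    apply hz0
    have h1 := H z hz
    have h2 := H _ (I.mul_mem_left (Complex.I ⊗ₜ[ℝ] (1 : A)) _ hz)
    rw [reA_I, neg_eq_zero] at h2
    rw [decomp z, h1, h2]; simp
  let J : TwoSidedIdeal A := TwoSidedIdeal.mk' {a | ∃ w ∈ I, reA A w = a}
    ⟨0, I.zero_mem, by simp⟩
    (by rintro x y ⟨u, hu, rfl⟩ ⟨v, hv, rfl⟩; exact ⟨u + v, I.add_mem hu hv, by simp⟩)
    (by rintro x ⟨u, hu, rfl⟩; exact ⟨-u, I.neg_mem hu, by simp⟩)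
    (by rintro x y ⟨u, hu, rfl⟩; exact ⟨_, I.mul_mem_left _ _ hu, reA_left x u⟩)
    (by rintro x y ⟨u, hu, rfl⟩; exact ⟨_, I.mul_mem_right _ _ hu, reA_right y u⟩)
  have h1 : (1 : A) ∈ J := IsSimpleRing.one_mem_of_ne_zero_mem J hw0
      (by rw [TwoSidedIdeal.mem_mk']; exact ⟨w, hw, rfl⟩)
  rw [TwoSidedIdeal.mem_mk'] at h1
  obtain ⟨v, hv, hv1⟩ := h1
  have hv2 := decomp v
  rw [hv1] at hv2
  set b := imA A v
  by_cases hb : ∀ x, b * x = x * b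
  · have hbc : b ∈ Subalgebra.center ℝ A := by
      rw [Subalgebra.mem_center_iff]; exact fun x => (hb x).symm
    rw [Algebra.IsCentral.center_eq_bot, Algebra.mem_bot] at hbc
    obtain ⟨r, hr⟩ := hbc
    have hne : (1 + r • Complex.I) ≠ 0 := by
      intro h
      have := congrArg Complex.re h
      simp at this
    have : v = (1 + r • Complex.I) ⊗ₜ[ℝ] (1 : A) := by
      rw [hv2, ← hr, TensorProduct.add_tmul, TensorProduct.smul_tmul, Algebra.algebraMap_eq_smul_one]
    have h3 := I.mul_mem_left (((1 + r • Complex.I)⁻¹) ⊗ₜ[ℝ] (1 : A)) _ hv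
    rw [this, Algebra.TensorProduct.tmul_mul_tmul, inv_mul_cancel₀ hne, mul_one] at h3
    exact h3
  · push Not at hb
    obtain ⟨x, hx⟩ := hb
    refine key1 I (b * x - x * b) (sub_ne_zero.mpr hx) ?_
    have h4 := I.sub_mem (I.mul_mem_right _ ((1 : ℂ) ⊗ₜ[ℝ] x) hv)
      (I.mul_mem_left ((1 : ℂ) ⊗ₜ[ℝ] x) _ hv)
    have h5 := I.mul_mem_left ((-Complex.I) ⊗ₜ[ℝ] (1 : A)) _ h4
    have : (-Complex.I) ⊗ₜ[ℝ] (1 : A) * (v * (1 : ℂ) ⊗ₜ[ℝ] x - (1 : ℂ) ⊗ₜ[ℝ] x * v)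
        = (1 : ℂ) ⊗ₜ[ℝ] (b * x - x * b) := by
      rw [hv2]
      simp [add_mul, mul_add, mul_sub, TensorProduct.tmul_sub]
    rwa [this] at h5

end

open Polynomial in
lemma sqrt_mod (s : Multiset ℂ) (hs : (0 : ℂ) ∉ s) :
    ∃ p : ℂ[X], (s.map (fun a => X - C a)).prod ∣ p ^ 2 - X := by
  induction s using Multiset.induction_on with
  | empty => exact ⟨0, by simp⟩
  | cons a s ih =>
    obtain ⟨p, q, hq⟩ := ih (fun h => hs (Multiset.mem_cons_of_mem h))
    have ha : a ≠ 0 := fun h => hs (h ▸ Multiset.mem_cons_self a s)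
    set m := (s.map (fun a => X - C a)).prod
    have hqa := congrArg (eval a) hq
    simp only [eval_sub, eval_pow, eval_X, eval_mul] at hqa
    obtain ⟨r, hr⟩ : ∃ r : ℂ, eval a q + 2 * eval a p * r + eval a m * r ^ 2 = 0 := by
      by_cases hm : eval a m = 0
      · have hp : eval a p ≠ 0 := by
          intro h
          rw [h, hm] at hqa
          apply ha
          linear_combination -hqa
        refine ⟨- eval a q / (2 * eval a p), ?_⟩
        rw [hm]; field_simp; ring
      · obtain ⟨d, hd⟩ := IsAlgClosed.exists_pow_nat_eq a (n := 2) (by norm_num)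
        refine ⟨(d - eval a p) / eval a m, ?_⟩
        have : eval a q = (eval a p ^ 2 - a) / eval a m := by
          rw [hqa]; field_simp
        rw [this, ← hd]; field_simp; ring
    refine ⟨p + m * C r, ?_⟩
    have hd : X - C a ∣ q + 2 * p * C r + m * C r ^ 2 := by
      rw [dvd_iff_isRoot]
      simpa using hr
    obtain ⟨e, he⟩ := hd
    refine ⟨e, ?_⟩
    rw [Multiset.map_cons, Multiset.prod_cons]
    linear_combination hq + m * he

open Polynomial in
lemma matrix_sqrt {n : ℕ} (y : Matrix (Fin n) (Fin n) ℂ) (hy : IsUnit y) :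
    ∃ p : ℂ[X], aeval y p * aeval y p = y := by
  have h0 : (0 : ℂ) ∉ y.charpoly.roots := by
    intro h
    have h1 := (Polynomial.mem_roots'.mp h).2
    rw [IsRoot, Matrix.eval_charpoly] at h1
    have : IsUnit (-y).det := (Matrix.isUnit_iff_isUnit_det _).mp hy.neg
    simp at h1
    exact this.ne_zero h1
  obtain ⟨p, q, hq⟩ := sqrt_mod _ h0
  have hc : (y.charpoly.roots.map (fun a => X - C a)).prod = y.charpoly :=
    ((IsAlgClosed.splits y.charpoly).eq_prod_roots_of_monic y.charpoly_monic).symm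
  rw [hc] at hq
  refine ⟨p, ?_⟩
  have := congrArg (aeval y) hq
  rw [map_mul, Matrix.aeval_self_charpoly, zero_mul, map_sub, map_pow, aeval_X, sub_eq_zero] at this
  rw [← sq, this]

/-- Skolem-Noether for matrices. -/
lemma matrix_inner {n : ℕ} (f : Matrix (Fin n) (Fin n) ℂ ≃ₐ[ℂ] Matrix (Fin n) (Fin n) ℂ) :
    ∃ J J' : Matrix (Fin n) (Fin n) ℂ, J * J' = 1 ∧ J' * J = 1 ∧ ∀ x, f x = J * x * J' := by
  let e : Matrix (Fin n) (Fin n) ℂ ≃ₐ[ℂ] Module.End ℂ (Fin n → ℂ) := Matrix.toLinAlgEquiv'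
  obtain ⟨T, hT⟩ := ((e.symm.trans f).trans e).eq_linearEquivConjAlgEquiv
  refine ⟨e.symm T.toLinearMap, e.symm T.symm.toLinearMap, ?_, ?_, ?_⟩
  · rw [← map_mul, ← map_one e.symm]; congr 1; ext; simp
  · rw [← map_mul, ← map_one e.symm]; congr 1; ext; simp
  · intro x
    apply e.injective
    have := congrArg (fun g => g (e x)) hT
    simp only [AlgEquiv.trans_apply, AlgEquiv.symm_apply_apply] at this
    rw [this]
    simp only [map_mul, AlgEquiv.apply_symm_apply]
    ext; simp

lemma exists_unit {n : ℕ} (t : Matrix (Fin n) (Fin n) ℂ) :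
    ∃ u : ℂ, IsUnit (u • (1 : Matrix (Fin n) (Fin n) ℂ) + (starRingEnd ℂ u) • t) := by
  let P : Polynomial ℂ := (Matrix.det ((Polynomial.X : Polynomial ℂ) • (1 + t).map Polynomial.C +
    (Complex.I • (1 - t)).map Polynomial.C))
  have hP : ∀ r : ℂ, P.eval r = (r • (1 + t) + Complex.I • (1 - t)).det := by
    intro r
    rw [← Polynomial.coe_evalRingHom, RingHom.map_det]
    congr 1
    ext i j
    simp
    ring
  have hP0 : P ≠ 0 := by
    intro h
    have h1 := hP Complex.I
    rw [h, Polynomial.eval_zero, ← smul_add] at h1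
    have : (1 + t + (1 - t)) = (2 : ℂ) • (1 : Matrix (Fin n) (Fin n) ℂ) := by
      rw [two_smul]; abel
    rw [this, smul_smul, Matrix.det_smul, Matrix.det_one, mul_one] at h1
    exact pow_ne_zero _ (mul_ne_zero Complex.I_ne_zero two_ne_zero) h1.symm
  obtain ⟨r, hr⟩ : ∃ r : ℝ, P.eval (r : ℂ) ≠ 0 := by
    by_contra! H
    apply hP0
    apply Polynomial.eq_zero_of_infinite_isRoot
    refine (Set.infinite_range_of_injective Complex.ofReal_injective).mono ?_
    rintro _ ⟨r, rfl⟩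
    exact H r
  refine ⟨r + Complex.I, ?_⟩
  rw [Matrix.isUnit_iff_isUnit_det, isUnit_iff_ne_zero]
  rw [hP] at hr
  convert hr using 2
  simp only [map_add, Complex.conj_ofReal, Complex.conj_I]
  module


section core
variable {n : ℕ}
local notation "MM" => Matrix (Fin n) (Fin n) ℂ

lemma sigma_form [NeZero n] (σ : MM →ₗ[ℂ] MM) (hinv : ∀ x, σ (σ x) = x)
    (hanti : ∀ x y, σ (x * y) = σ y * σ x) (h1 : σ 1 = 1) :
    ∃ (s s' : MM) (l : ℂ), s * s' = 1 ∧ s' * s = 1 ∧ (∀ x, σ x = s' * x.transpose * s) ∧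
      s.transpose = l • s ∧ s'.transpose = l • s' ∧ l * l = 1 ∧ starRingEnd ℂ l = l := by
  let F : MM →ₐ[ℂ] MM := AlgHom.ofLinearMap
    (σ ∘ₗ (Matrix.transposeLinearEquiv (Fin n) (Fin n) ℂ ℂ).toLinearMap)
    (by simp [h1]) (by intro x y; simp [Matrix.transpose_mul, hanti])
  have hF : ∀ x, F x = σ x.transpose := fun x => rfl
  have hbij : Function.Bijective F := by
    constructor
    · intro x y h
      have h2 := congrArg σ h
      rw [hF, hF, hinv, hinv] at h2
      exact Matrix.transpose_injective h2
    · intro x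
      exact ⟨(σ x).transpose, by rw [hF, Matrix.transpose_transpose, hinv]⟩
  obtain ⟨s', s, h, h', hs⟩ := matrix_inner (AlgEquiv.ofBijective F hbij)
  have hσ : ∀ x, σ x = s' * x.transpose * s := by
    intro x
    rw [← hs x.transpose]
    simp [hF]
  have hT : s'.transpose * s.transpose = 1 := by
    rw [← Matrix.transpose_mul, h', Matrix.transpose_one]
  have hT' : s.transpose * s'.transpose = 1 := by
    rw [← Matrix.transpose_mul, h, Matrix.transpose_one]
  have hcen : s' * s.transpose ∈ Subalgebra.center ℂ MM := by
    rw [Subalgebra.mem_center_iff]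
    intro x
    have h3 := hinv x
    rw [hσ, hσ] at h3
    simp only [Matrix.transpose_mul, Matrix.transpose_transpose] at h3
    calc x * (s' * s.transpose)
        = (s' * (s.transpose * (x * s'.transpose)) * s) * (s' * s.transpose) := by rw [h3]
      _ = s' * s.transpose * x * s'.transpose * (s * s') * s.transpose := by noncomm_ring
      _ = s' * s.transpose * x * (s'.transpose * s.transpose) := by rw [h']; noncomm_ring
      _ = s' * s.transpose * x := by rw [hT, mul_one]
  rw [Algebra.IsCentral.center_eq_bot, Algebra.mem_bot] at hcen
  obtain ⟨l, hl⟩ := hcen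
  rw [Algebra.algebraMap_eq_smul_one] at hl
  have hst : s.transpose = l • s := by
    calc s.transpose = s * s' * s.transpose := by rw [h', one_mul]
      _ = s * (s' * s.transpose) := by rw [mul_assoc]
      _ = l • s := by rw [← hl]; simp
  have hll : l * l = 1 := by
    have h4 : s = (l * l) • s := by
      conv_lhs => rw [← Matrix.transpose_transpose s, hst, Matrix.transpose_smul, hst, smul_smul]
    have h5 : (1 : MM) = (l * l) • 1 := by
      rw [← h']
      conv_lhs => rw [h4]
      rw [smul_mul_assoc]
    have h6 := congrFun (congrFun h5 0) 0
    simp at h6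
    exact h6.symm
  refine ⟨s, s', l, h', h, hσ, hst, ?_, hll, ?_⟩
  · calc s'.transpose = (l * l) • s'.transpose := by rw [hll, one_smul]
      _ = l • (l • (s' * s)) * s'.transpose := by rw [h]; simp [smul_smul]
      _ = l • (s' * (l • s) * s'.transpose) := by simp
      _ = l • s' := by rw [← hst, mul_assoc, hT', mul_one]
  · rcases mul_self_eq_one_iff.mp hll with h | h <;> simp [h]

lemma tau_form [NeZero n] (τ : MM →+* MM) (hτ : ∀ (c : ℂ) x, τ (c • x) = starRingEnd ℂ c • τ x)
    (hττ : ∀ x, τ (τ x) = x) :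
    ∃ (J J' : MM) (c : ℂ), J * J' = 1 ∧ J' * J = 1 ∧
      (∀ x, τ x = J * x.map (starRingEnd ℂ) * J') ∧ c ≠ 0 ∧ starRingEnd ℂ c = c ∧
      J.map (starRingEnd ℂ) = c • J' := by
  let bar : MM →+* MM := (starRingEnd ℂ).mapMatrix
  have hbb : ∀ x, bar (bar x) = x := by intro x; ext; simp [bar]
  have hbs : ∀ (c : ℂ) x, bar (c • x) = starRingEnd ℂ c • bar x := by
    intro c x; ext; simp [bar]
  let F : MM →ₐ[ℂ] MM := AlgHom.ofLinearMap
    { toFun := fun x => τ (bar x)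
      map_add' := by simp
      map_smul' := by intro c x; simp [hbs, hτ] }
    (by simp) (by simp)
  have hF : ∀ x, F x = τ (bar x) := fun x => rfl
  have hbij : Function.Bijective F := by
    constructor
    · intro x y h
      have h2 := congrArg (fun z => bar (τ z)) h
      simpa only [hF, hττ, hbb] using h2
    · intro x
      exact ⟨bar (τ x), by rw [hF, hbb, hττ]⟩
  obtain ⟨J, J', h, h', hs⟩ := matrix_inner (AlgEquiv.ofBijective F hbij)
  have hform : ∀ x, τ x = J * bar x * J' := by
    intro x
    rw [← hs (bar x)]
    simp [hF, hbb]
  have hb : bar J * bar J' = 1 := by rw [← map_mul, h, map_one]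
  have hb' : bar J' * bar J = 1 := by rw [← map_mul, h', map_one]
  have hcen : J * bar J ∈ Subalgebra.center ℂ MM := by
    rw [Subalgebra.mem_center_iff]
    intro x
    have h3 := hττ x
    rw [hform, hform, map_mul, map_mul, hbb] at h3
    calc x * (J * bar J)
        = (J * (bar J * x * bar J') * J') * (J * bar J) := by rw [h3]
      _ = J * bar J * x * bar J' * (J' * J) * bar J := by noncomm_ring
      _ = J * bar J * x * (bar J' * bar J) := by rw [h']; noncomm_ring
      _ = J * bar J * x := by rw [hb', mul_one]
  rw [Algebra.IsCentral.center_eq_bot, Algebra.mem_bot] at hcen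
  obtain ⟨c, hc⟩ := hcen
  rw [Algebra.algebraMap_eq_smul_one] at hc
  have hJ : bar J = c • J' := by
    calc bar J = J' * J * bar J := by rw [h', one_mul]
      _ = J' * (J * bar J) := by rw [mul_assoc]
      _ = c • J' := by rw [← hc]; simp
  refine ⟨J, J', c, h, h', hform, ?_, ?_, hJ⟩
  · rintro rfl
    rw [zero_smul] at hJ
    rw [hJ, zero_mul] at hb
    exact zero_ne_one hb
  · have h5 : bar J * J = c • 1 := by rw [hJ, smul_mul_assoc, h']
    have h6 := congrArg bar hc
    rw [map_mul, hbb, h5, hbs, map_one] at h6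
    have h7 := congrFun (congrFun h6 0) 0
    simpa using h7

lemma exists_t [NeZero n] (σ : MM →ₗ[ℂ] MM) (hinv : ∀ x, σ (σ x) = x)
    (hanti : ∀ x y, σ (x * y) = σ y * σ x) (h1 : σ 1 = 1)
    (τ : MM →+* MM) (hτ : ∀ (c : ℂ) x, τ (c • x) = starRingEnd ℂ c • τ x)
    (hττ : ∀ x, τ (τ x) = x) :
    ∃ t : MM, τ t * t = 1 ∧ σ t = t ∧ ∀ x, τ (σ x) * t = t * σ (τ x) := by
  obtain ⟨s, s', l, hs, hs', hσ, hst, hst', hll, hlc⟩ := sigma_form σ hinv hanti h1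
  obtain ⟨J, J', c, hJ, hJ', hform, hc0, hcc, hJb⟩ := tau_form τ hτ hττ
  let bar : MM →+* MM := (starRingEnd ℂ).mapMatrix
  have hbar : ∀ x : MM, x.map (starRingEnd ℂ) = bar x := fun x => rfl
  have hbb : ∀ x, bar (bar x) = x := by intro x; ext; simp [bar]
  have hbs : ∀ (c : ℂ) x, bar (c • x) = starRingEnd ℂ c • bar x := by
    intro c x; ext; simp [bar]
  have hbt : ∀ x : MM, bar x.transpose = (bar x).transpose := by intro x; ext; simp [bar]
  simp only [hbar] at hform hJb
  have hJb' : bar J' = c⁻¹ • J := by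
    have h2 := congrArg bar hJb
    rw [hbb, hbs, hcc] at h2
    rw [h2, smul_smul, inv_mul_cancel₀ hc0, one_smul]
  have hsb : bar s * bar s' = 1 := by rw [← map_mul, hs, map_one]
  have hsb' : bar s' * bar s = 1 := by rw [← map_mul, hs', map_one]
  have hJT : J.transpose * J'.transpose = 1 := by
    rw [← Matrix.transpose_mul, hJ', Matrix.transpose_one]
  have hJT' : J'.transpose * J.transpose = 1 := by
    rw [← Matrix.transpose_mul, hJ, Matrix.transpose_one]
  have hsbt : (bar s').transpose = l • bar s' := by
    rw [← hbt, hst', hbs, hlc]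
  have cancel : ∀ {a b : MM}, a * b = 1 → ∀ x, a * (b * x) = x := by
    intro a b h x; rw [← mul_assoc, h, one_mul]
  refine ⟨c⁻¹ • (J * (bar s' * (J.transpose * s))), ?_, ?_, ?_⟩
  · rw [hτ, hform, map_inv₀, hcc]
    simp only [map_mul, hbb, hbt, hJb, Matrix.transpose_smul, mul_assoc, smul_mul_assoc,
      mul_smul_comm, smul_smul, cancel hJ, cancel hJ', cancel hsb, cancel hJT', hs']
    have : c⁻¹ * (c⁻¹ * (c * c)) = 1 := by field_simp
    rw [this, one_smul]
  · rw [map_smul, hσ]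
    simp only [Matrix.transpose_mul, Matrix.transpose_transpose, hst, hsbt, mul_assoc,
      smul_mul_assoc, mul_smul_comm, smul_smul, cancel hs']
    congr 1
    linear_combination (c⁻¹) * hll
  · intro x
    rw [hform, hform, hσ, hσ]
    simp only [Matrix.transpose_mul, map_mul, hbb, hbt, mul_assoc, smul_mul_assoc, mul_smul_comm,
      smul_smul, cancel hs, cancel hJ', cancel hsb, cancel hJT]

lemma core [NeZero n] (σ : MM →ₗ[ℂ] MM) (hinv : ∀ x, σ (σ x) = x)
    (hanti : ∀ x y, σ (x * y) = σ y * σ x)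
    (τ : MM →+* MM) (hτ : ∀ (c : ℂ) x, τ (c • x) = starRingEnd ℂ c • τ x)
    (hττ : ∀ x, τ (τ x) = x) :
    ∃ y y' g : MM, y * y' = 1 ∧ y' * y = 1 ∧ g * g = y ∧ σ y = y ∧ σ g = g ∧
      (∀ x, τ (y * σ x * y') = y * σ (τ x) * y') ∧
      (∀ x, τ x = x → σ x * x = 1 → y * σ x = σ x * y) := by
  have h1 : σ 1 = 1 := by
    have := hanti (σ 1) 1
    rwa [mul_one, hinv, mul_one, eq_comm] at this
  obtain ⟨t, ht1, ht2, ht3⟩ := exists_t σ hinv hanti h1 τ hτ hττ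
  obtain ⟨u, hu⟩ := exists_unit t
  obtain ⟨p, hp⟩ := matrix_sqrt _ hu
  set y := u • (1 : MM) + (starRingEnd ℂ u) • t with hy
  obtain ⟨yu, hyu⟩ := hu
  have hyy : y * ((yu⁻¹ : MMˣ) : MM) = 1 := by rw [← hyu]; simp
  have hyy' : ((yu⁻¹ : MMˣ) : MM) * y = 1 := by rw [← hyu]; simp
  have hσy : σ y = y := by rw [hy, map_add, map_smul, map_smul, h1, ht2]
  have hpow : ∀ k : ℕ, σ (y ^ k) = y ^ k := by
    intro k
    induction k with
    | zero => simpa using h1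
    | succ k ih => rw [pow_succ, hanti, ih, hσy, ← pow_succ']; exact pow_succ y k
  have hτy : τ y * t = y := by
    rw [hy, map_add, hτ, hτ, map_one, add_mul, smul_mul_assoc, smul_mul_assoc, one_mul, ht1,
      Complex.conj_conj, add_comm]
  refine ⟨y, _, Polynomial.aeval y p, hyy, hyy', hp, hσy, ?_, ?_, ?_⟩
  · rw [Polynomial.aeval_eq_sum_range, map_sum]
    simp [hpow]
  · intro x
    have h2 : τ (y * σ x * ((yu⁻¹ : MMˣ) : MM)) * y = y * σ (τ x) := by
      have h3 : τ ((yu⁻¹ : MMˣ) : MM) * y = t := by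
        rw [← hτy, ← mul_assoc, ← map_mul, hyy', map_one, one_mul]
      rw [map_mul, mul_assoc, h3, map_mul, mul_assoc, ht3, ← mul_assoc, hτy]
    rw [← h2, mul_assoc _ y, hyy, mul_one]
  · intro x hx hx1
    have h2 : τ (σ x) * x = 1 := by
      have := congrArg τ hx1
      rwa [map_mul, hx, map_one] at this
    have h3 : x * σ x = 1 := mul_eq_one_comm.mp hx1
    have h4 : τ (σ x) = σ x := by
      calc τ (σ x) = τ (σ x) * (x * σ x) := by rw [h3, mul_one]
        _ = σ x := by rw [← mul_assoc, h2, one_mul]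
    have h5 := ht3 x
    rw [h4, hx] at h5
    rw [hy, add_mul, mul_add, smul_mul_assoc, smul_mul_assoc, mul_smul_comm, mul_smul_comm, h5,
      one_mul, mul_one]

end core

end DescendAux

/-- Any ℂ-linear anti-involution `σ` of the complexification `A_ℂ = ℂ ⊗[ℝ] A` of a
finite-dimensional central simple ℝ-algebra `A` is equivalent to the ℂ-linear
extension of some ℝ-linear anti-involution `σ'` of `A`; moreover every `x ∈ A`
(viewed in `A_ℂ`) which is invertible and satisfies `σ(x)·x = 1` also satisfies
`σ'(x)·x = 1`. -/
theorem descend_antiInvolution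
    (A : Type*) [Ring A] [Algebra ℝ A] [FiniteDimensional ℝ A]
    [Algebra.IsCentral ℝ A] [IsSimpleRing A]
    (σ : (ℂ ⊗[ℝ] A) →ₗ[ℂ] (ℂ ⊗[ℝ] A))
    (hinv : ∀ x, σ (σ x) = x)
    (hanti : ∀ x y, σ (x * y) = σ y * σ x) :
    ∃ σ' : A →ₗ[ℝ] A,
      (∀ x, σ' (σ' x) = x) ∧
      (∀ x y, σ' (x * y) = σ' y * σ' x) ∧
      (∃ g : (ℂ ⊗[ℝ] A)ˣ,
        ∀ x, σ x = (↑g⁻¹ : ℂ ⊗[ℝ] A) *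
          (LinearMap.baseChange ℂ σ') ((↑g : ℂ ⊗[ℝ] A) * x * (↑g⁻¹ : ℂ ⊗[ℝ] A)) *
          (↑g : ℂ ⊗[ℝ] A)) ∧
      (∀ x : A, IsUnit x →
        σ ((1 : ℂ) ⊗ₜ[ℝ] x) * ((1 : ℂ) ⊗ₜ[ℝ] x) = 1 → σ' x * x = 1) := by
  have := DescendAux.simple_complexification (A := A)
  obtain ⟨n, hn, ⟨φ⟩⟩ := IsSimpleRing.exists_algEquiv_matrix_of_isAlgClosed ℂ (ℂ ⊗[ℝ] A)
  let τ : (ℂ ⊗[ℝ] A) →ₐ[ℝ] (ℂ ⊗[ℝ] A) :=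
    Algebra.TensorProduct.map (Complex.conjAe : ℂ →ₐ[ℝ] ℂ) (AlgHom.id ℝ A)
  have hτt : ∀ (c : ℂ) (a : A), τ (c ⊗ₜ a) = (starRingEnd ℂ c) ⊗ₜ a := by
    intro c a; simp [τ]
  have hττ : ∀ x, τ (τ x) = x := by
    intro x
    induction x with
    | zero => simp
    | tmul c a => simp [hτt]
    | add x y hx hy => simp [hx, hy]
  have hτs : ∀ (c : ℂ) x, τ (c • x) = starRingEnd ℂ c • τ x := by
    intro c x
    induction x with
    | zero => simp
    | tmul d a => simp [hτt, TensorProduct.smul_tmul']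
    | add x y hx hy => simp [hx, hy]
  obtain ⟨Y, Y', G, h1, h2, h3, h4, h5, h6, h7⟩ := DescendAux.core (n := n)
    (φ.toLinearMap ∘ₗ σ ∘ₗ φ.symm.toLinearMap)
    (by intro x; simp [hinv]) (by intro x y; simp [hanti])
    ((φ : (ℂ ⊗[ℝ] A) →+* _).comp ((τ : (ℂ ⊗[ℝ] A) →+* (ℂ ⊗[ℝ] A)).comp
      (φ.symm : _ →+* (ℂ ⊗[ℝ] A))))
    (by intro c x; simp [hτs]) (by intro x; simp [hττ])
  obtain ⟨y, rfl⟩ := φ.surjective Y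
  obtain ⟨y', rfl⟩ := φ.surjective Y'
  obtain ⟨g, rfl⟩ := φ.surjective G
  replace h1 : y * y' = 1 := φ.injective (by rw [map_mul, h1, map_one])
  replace h2 : y' * y = 1 := φ.injective (by rw [map_mul, h2, map_one])
  replace h3 : g * g = y := φ.injective (by rw [map_mul, h3])
  replace h4 : σ y = y := φ.injective (by simpa using h4)
  replace h5 : σ g = g := φ.injective (by simpa using h5)
  replace h6 : ∀ x, τ (y * σ x * y') = y * σ (τ x) * y' := by
    intro x
    apply φ.injective
    simpa using h6 (φ x)
  replace h7 : ∀ x, τ x = x → σ x * x = 1 → y * σ x = σ x * y := by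
    intro x hx hx1
    apply φ.injective
    simpa using h7 (φ x) (by simp [hx]) (by simp [← map_mul, hx1])
  have hσ1 : σ 1 = 1 := by
    have := hanti (σ 1) 1
    rwa [mul_one, hinv, mul_one, eq_comm] at this
  have hσy' : σ y' = y' := by
    have h8 : σ y' * y = 1 := by rw [← hσ1, ← h1, hanti, h4]
    calc σ y' = σ y' * (y * y') := by rw [h1, mul_one]
      _ = y' := by rw [← mul_assoc, h8, one_mul]
  -- the twisted anti-involution, commuting with conjugation
  let ρ : (ℂ ⊗[ℝ] A) →ₗ[ℂ] (ℂ ⊗[ℝ] A) := LinearMap.mulRight ℂ y' ∘ₗ LinearMap.mulLeft ℂ y ∘ₗ σ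
  have hρ : ∀ x, ρ x = y * σ x * y' := fun x => rfl
  have hρρ : ∀ x, ρ (ρ x) = x := by
    intro x
    rw [hρ, hρ, hanti, hanti, hσy', h4, hinv]
    calc y * (y' * (x * y)) * y' = (y * y') * x * (y * y') := by noncomm_ring
      _ = x := by rw [h1, one_mul, mul_one]
  have hρm : ∀ x z, ρ (x * z) = ρ z * ρ x := by
    intro x z
    rw [hρ, hρ, hρ, hanti]
    calc y * (σ z * σ x) * y' = y * σ z * 1 * σ x * y' := by noncomm_ring
      _ = _ := by rw [← h2]; noncomm_ring
  have hfix : ∀ z, τ z = z → (1 : ℂ) ⊗ₜ[ℝ] DescendAux.reA A z = z := by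
    intro z hz
    have h8 := DescendAux.decomp z
    have h9 := congrArg τ h8
    rw [hz, map_add, hτt, hτt] at h9
    simp only [map_one, Complex.conj_I, TensorProduct.neg_tmul] at h9
    have h10 : (2 : ℝ) • z = (2 : ℝ) • ((1 : ℂ) ⊗ₜ[ℝ] DescendAux.reA A z) := by
      rw [two_smul, two_smul]
      nth_rw 1 [h8]
      nth_rw 3 [h9]
      abel
    exact (smul_right_injective _ (two_ne_zero (α := ℝ)) h10).symm
  let σ' : A →ₗ[ℝ] A := DescendAux.reA A ∘ₗ ρ.restrictScalars ℝ ∘ₗ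
    (TensorProduct.mk ℝ ℂ A 1)
  have hσ' : ∀ a, (1 : ℂ) ⊗ₜ[ℝ] σ' a = ρ ((1 : ℂ) ⊗ₜ[ℝ] a) := by
    intro a
    refine hfix (ρ ((1 : ℂ) ⊗ₜ[ℝ] a)) ?_
    rw [hρ, h6, hτt, map_one]
  have hinj : ∀ a b : A, (1 : ℂ) ⊗ₜ[ℝ] a = (1 : ℂ) ⊗ₜ[ℝ] b → a = b := by
    intro a b h
    simpa using congrArg (DescendAux.reA A) h
  have hbc : ∀ z, LinearMap.baseChange ℂ σ' z = ρ z := by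
    intro z
    induction z with
    | zero => simp
    | tmul c a =>
      rw [LinearMap.baseChange_tmul]
      have e : ∀ b : A, c ⊗ₜ[ℝ] b = c • ((1 : ℂ) ⊗ₜ[ℝ] b) := by
        intro b; simp [TensorProduct.smul_tmul']
      rw [e, e, hσ', map_smul]
    | add x y hx hy => rw [map_add, map_add, hx, hy]
  have hgy : g * y' * g = 1 := by
    have hc : g * y = y * g := by rw [← h3, mul_assoc]
    calc g * y' * g = y' * y * g * y' * g := by rw [h2, one_mul]
      _ = y' * (y * g) * y' * g := by noncomm_ring
      _ = y' * g * (y * y') * g := by rw [← hc]; noncomm_ring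
      _ = y' * (g * g) := by rw [h1]; noncomm_ring
      _ = 1 := by rw [h3, h2]
  have hg1 : g * (g * y') = 1 := by rw [← mul_assoc, h3, h1]
  have hg2 : (g * y') * g = 1 := hgy
  refine ⟨σ', ?_, ?_, ⟨⟨g, g * y', hg1, hg2⟩, ?_⟩, ?_⟩
  · intro x
    apply hinj
    rw [hσ', hσ', hρρ]
  · intro x z
    apply hinj
    have e : ∀ a b : A, (1 : ℂ) ⊗ₜ[ℝ] (a * b) = (1 : ℂ) ⊗ₜ[ℝ] a * (1 : ℂ) ⊗ₜ[ℝ] b := by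
      intro a b; simp
    rw [hσ', e, e, hρm, hσ', hσ']
  · intro x
    rw [hbc]
    simp only [Units.inv_mk, hρ]
    rw [hanti, hanti, hanti, h5, hσy']
    symm
    calc g * y' * (y * (y' * g * (σ x * g)) * y') * g
        = g * (y' * y) * y' * g * σ x * (g * y' * g) := by noncomm_ring
      _ = (g * y' * g) * σ x * (g * y' * g) := by rw [h2]; noncomm_ring
      _ = σ x := by rw [hgy, one_mul, mul_one]
  · intro x _ hx
    apply hinj
    have e : ∀ a b : A, (1 : ℂ) ⊗ₜ[ℝ] (a * b) = (1 : ℂ) ⊗ₜ[ℝ] a * (1 : ℂ) ⊗ₜ[ℝ] b := by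
      intro a b; simp
    have h8 := h7 _ (by rw [hτt, map_one]) hx
    rw [e, hσ', hρ, h8, mul_assoc _ y y', h1, mul_one, hx, Algebra.TensorProduct.one_def]
end

section
/- Fix N ≥ 1 and identify M(m,ℍ) with the subalgebra {x ∈ M(2m,ℂ) : x J_m = J_m x̄} of M(2m,ℂ), where x̄ is the entrywise complex conjugate. Set O(N,ℂ) := {x ∈ M(N,ℂ) : xᵀ x = I_N}, Sp(m,ℂ) := {x ∈ M(2m,ℂ) : xᵀ J_m x = J_m}, O(p,q) := {x ∈ M(N,ℝ) : xᵀ I_{p,q} x = I_{p,q}}, Sp(m,ℝ) := {x ∈ M(2m,ℝ) : xᵀ J_m x = J_m}, O*(2m) := {x ∈ M(m,ℍ) : xᴴ (j·I_m) x = j·I_m}, and Sp(r,s) := {x ∈ M(r+s,ℍ) : xᴴ I_{r,s} x = I_{r,s}}. Then for every invertible g ∈ M(N,ℂ): (1) there exist p, q with p+q = N and an invertible h ∈ M(N,ℂ) such that h⁻¹ x h ∈ O(p,q) for every real invertible matrix x with g x g⁻¹ ∈ O(N,ℂ); (2) if N = 2m, there is an invertible h ∈ M(N,ℂ) with h⁻¹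 x h ∈ Sp(m,ℝ) for every real invertible x with g x g⁻¹ ∈ Sp(m,ℂ); (3) if N = 2m, there is an invertible h ∈ M(N,ℂ) with h⁻¹ x h ∈ O*(2m) for every invertible x ∈ M(m,ℍ) with g x g⁻¹ ∈ O(N,ℂ); (4) if N = 2m, there exist r, s with r+s = m and an invertible h ∈ M(N,ℂ) with h⁻¹ x h ∈ Sp(r,s) for every invertible x ∈ M(m,ℍ) with g x g⁻¹ ∈ Sp(m,ℂ). -/
open Matrix

/-- `I_{p,q}`: the diagonal matrix `diag(I_p, −I_q)` of size `N = p + q`. -/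
def Ipq (N p : ℕ) : Matrix (Fin N) (Fin N) ℂ :=
  Matrix.diagonal fun k => if (k : ℕ) < p then 1 else -1

/-- The `2m × 2m` block matrix `J_m = [[0, −I_m],[I_m, 0]]`. -/
def Jc (m : ℕ) : Matrix (Fin m ⊕ Fin m) (Fin m ⊕ Fin m) ℂ :=
  Matrix.fromBlocks 0 (-1) 1 0

/-- A complex matrix with real entries, i.e. a member of `M(N,ℝ) ⊆ M(N,ℂ)`. -/
def IsRealMat {ι : Type} (x : Matrix ι ι ℂ) : Prop :=
  ∀ i j, (x i j).im = 0

/-- Membership in the image of `M(m,ℍ)` inside `M(2m,ℂ)`: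
`x J_m = J_m x̄`, where `x̄` is the entrywise complex conjugate. -/
def IsQuatMat (m : ℕ) (x : Matrix (Fin m ⊕ Fin m) (Fin m ⊕ Fin m) ℂ) : Prop :=
  x * Jc m = Jc m * x.map (starRingEnd ℂ)

/-- Membership in `O(N,ℂ)` (over any index type): `xᵀ x = 1`. -/
def MemOC {ι : Type} [Fintype ι] [DecidableEq ι] (x : Matrix ι ι ℂ) : Prop :=
  xᵀ * x = 1

/-- Membership in `Sp(m,ℂ)`: `xᵀ J_m x = J_m`. -/
def MemSpC (m : ℕ) (x : Matrix (Fin m ⊕ Fin m) (Fin m ⊕ Fin m) ℂ) : Prop :=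
  xᵀ * Jc m * x = Jc m

/-- Membership in `O(p,q) ⊆ M(N,ℝ)` (viewed inside `M(N,ℂ)`):
`x` is real and `xᵀ I_{p,q} x = I_{p,q}`. -/
def MemOpq (N p : ℕ) (x : Matrix (Fin N) (Fin N) ℂ) : Prop :=
  IsRealMat x ∧ xᵀ * Ipq N p * x = Ipq N p

/-- Membership in `Sp(m,ℝ) ⊆ M(2m,ℝ)` (viewed inside `M(2m,ℂ)`):
`x` is real and `xᵀ J_m x = J_m`. -/
def MemSpR (m : ℕ) (x : Matrix (Fin m ⊕ Fin m) (Fin m ⊕ Fin m) ℂ) : Prop :=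
  IsRealMat x ∧ xᵀ * Jc m * x = Jc m

/-- Membership in `O*(2m) ⊆ M(m,ℍ)` (viewed inside `M(2m,ℂ)`, where the
quaternionic matrix `j·I_m` corresponds to `J_m` and the quaternionic conjugate
transpose corresponds to `ᴴ`): `x` is quaternionic and `xᴴ J_m x = J_m`. -/
def MemOstar (m : ℕ) (x : Matrix (Fin m ⊕ Fin m) (Fin m ⊕ Fin m) ℂ) : Prop :=
  IsQuatMat m x ∧ xᴴ * Jc m * x = Jc m

/-- Membership in `Sp(r,s) ⊆ M(m,ℍ)`, `r + s = m` (viewed inside `M(2m,ℂ)`, where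
the quaternionic matrix `I_{r,s}` corresponds to `diag(I_{r,s}, I_{r,s})`):
`x` is quaternionic and `xᴴ I_{r,s} x = I_{r,s}`. -/
def MemSpRS (m r : ℕ) (x : Matrix (Fin m ⊕ Fin m) (Fin m ⊕ Fin m) ℂ) : Prop :=
  IsQuatMat m x ∧
    xᴴ * Matrix.fromBlocks (Ipq m r) 0 0 (Ipq m r) * x =
      Matrix.fromBlocks (Ipq m r) 0 0 (Ipq m r)

set_option linter.all false


section diag
variable {D : Type} [DivisionRing D] [StarRing D]

def Diagable {ι : Type} [Fintype ι] [DecidableEq ι] (T : Matrix ι ι D) : Prop :=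
  ∃ P : Matrix ι ι D, IsUnit P ∧ ∃ d : ι → D, Pᴴ * T * P = diagonal d

lemma Diagable.of_conj {ι : Type} [Fintype ι] [DecidableEq ι] {T Q : Matrix ι ι D}
    (hQ : IsUnit Q) (h : Diagable (Qᴴ * T * Q)) : Diagable T := by
  obtain ⟨P, hP, d, hd⟩ := h
  refine ⟨Q * P, hQ.mul hP, d, ?_⟩
  rw [← hd, conjTranspose_mul]; simp only [Matrix.mul_assoc]

lemma isUnit_submatrix' {ι κ : Type} [Fintype ι] [DecidableEq ι] [Fintype κ] [DecidableEq κ]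
    {P : Matrix ι ι D} (e : κ ≃ ι) (h : IsUnit P) : IsUnit (P.submatrix e e) := by
  obtain ⟨u, rfl⟩ := h
  refine ⟨⟨(u : Matrix ι ι D).submatrix e e, ((u⁻¹ : (Matrix ι ι D)ˣ) : Matrix ι ι D).submatrix e e, ?_, ?_⟩, rfl⟩
  · rw [Matrix.submatrix_mul_equiv, Units.mul_inv, Matrix.submatrix_one_equiv]
  · rw [Matrix.submatrix_mul_equiv, Units.inv_mul, Matrix.submatrix_one_equiv]

lemma Diagable.of_equiv {ι κ : Type} [Fintype ι] [DecidableEq ι] [Fintype κ] [DecidableEq κ]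
    {T : Matrix ι ι D} (e : κ ≃ ι) (h : Diagable (T.submatrix e e)) : Diagable T := by
  obtain ⟨P, hP, d, hd⟩ := h
  refine ⟨P.submatrix e.symm e.symm, isUnit_submatrix' e.symm hP, d ∘ e.symm, ?_⟩
  have : T = (T.submatrix e e).submatrix e.symm e.symm := by simp
  rw [this, conjTranspose_submatrix, submatrix_mul_equiv, submatrix_mul_equiv, hd,
    submatrix_diagonal_equiv]

lemma isUnit_fromBlocks_diag {α β : Type} [Fintype α] [DecidableEq α] [Fintype β] [DecidableEq β]
    {P : Matrix β β D} (h : IsUnit P) : IsUnit (fromBlocks (1 : Matrix α α D) 0 0 P) := by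
  obtain ⟨u, rfl⟩ := h
  refine ⟨⟨fromBlocks 1 0 0 u, fromBlocks 1 0 0 ((u⁻¹ : (Matrix β β D)ˣ) : Matrix β β D), ?_, ?_⟩, rfl⟩ <;>
  simp [fromBlocks_multiply]

lemma isUnit_fromBlocks_upper {α β : Type} [Fintype α] [DecidableEq α] [Fintype β] [DecidableEq β]
    (X : Matrix α β D) : IsUnit (fromBlocks (1 : Matrix α α D) X 0 (1 : Matrix β β D)) := by
  refine ⟨⟨fromBlocks 1 X 0 1, fromBlocks 1 (-X) 0 1, ?_, ?_⟩, rfl⟩ <;>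
  simp [fromBlocks_multiply]

lemma herm_conj {ι : Type} [Fintype ι] [DecidableEq ι] {T : Matrix ι ι D} {ε : ℤ}
    (hT : Tᴴ = ε • T) (P : Matrix ι ι D) : (Pᴴ * T * P)ᴴ = ε • (Pᴴ * T * P) := by
  rw [conjTranspose_mul, conjTranspose_mul, conjTranspose_conjTranspose, hT]
  rw [Matrix.smul_mul, Matrix.mul_smul, Matrix.mul_assoc]

theorem diagable_all (ε : ℤ) (hε : ε * ε = 1) (hD : ∃ y : D, y + ε • star y ≠ 0) (n : ℕ) :
    ∀ (ι : Type) [Fintype ι] [DecidableEq ι], Fintype.card ι = n → ∀ T : Matrix ι ι D,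
      Tᴴ = ε • T → Diagable T := by
  induction n with
  | zero =>
    intro ι _ _ hc T _
    have := Fintype.card_eq_zero_iff.mp hc
    exact ⟨1, isUnit_one, 0, Subsingleton.elim _ _⟩
  | succ n ih =>
    intro ι _ _ hc
    -- the case of a nonzero diagonal entry
    have key : ∀ (T : Matrix ι ι D) (i : ι), Tᴴ = ε • T → T i i ≠ 0 → Diagable T := by
      intro T i hT hi
      apply Diagable.of_equiv (Equiv.sumCompl (fun k => k = i))
      set T' := T.submatrix (Equiv.sumCompl (fun k => k = i)) (Equiv.sumCompl (fun k => k = i)) with hT'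
      have hT'h : T'ᴴ = ε • T' := by
        rw [hT', conjTranspose_submatrix, hT]; rfl
      set A := T'.toBlocks₁₁ with hA
      set B := T'.toBlocks₁₂ with hB
      set X : Matrix {k // k = i} {k // ¬ k = i} D := - ((of fun _ _ => (T i i)⁻¹ : Matrix {k // k = i} {k // k = i} D) * B) with hX
      apply Diagable.of_conj (isUnit_fromBlocks_upper X)
      set R := (fromBlocks 1 X 0 1)ᴴ * T' * (fromBlocks 1 X 0 1) with hR
      have hRh : Rᴴ = ε • R := herm_conj hT'h _
      have hR12 : R.toBlocks₁₂ = 0 := by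
        have hAX : A * X + B = 0 := by
          rw [hX, Matrix.mul_neg, ← Matrix.mul_assoc]
          have : A * (of fun _ _ => (T i i)⁻¹ : Matrix {k // k = i} {k // k = i} D) = 1 := by
            ext ⟨a, rfl⟩ ⟨b, hb⟩
            subst hb
            simp [Matrix.mul_apply, hA, hT', toBlocks₁₁]
            exact mul_inv_cancel₀ hi
          rw [this]; simp
        rw [hR, ← fromBlocks_toBlocks T', fromBlocks_conjTranspose, fromBlocks_multiply,
          fromBlocks_multiply, toBlocks_fromBlocks₁₂, ← hAX]
        simp [hA, hB]
      have hR21 : R.toBlocks₂₁ = 0 := by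
        ext a b
        have h1 := congrFun (congrFun hRh (Sum.inr a)) (Sum.inl b)
        have h2 : R (Sum.inl b) (Sum.inr a) = 0 := congrFun (congrFun hR12 b) a
        rw [conjTranspose_apply, h2, star_zero, Matrix.smul_apply] at h1
        have h3 := congrArg (fun z => ε • z) h1
        simp only [smul_smul, hε, one_smul, smul_zero] at h3
        exact h3.symm
      have hcard : Fintype.card {k // ¬ k = i} = n := by
        rw [Fintype.card_subtype_compl, hc]; simp
      obtain ⟨P, hP, d, hd⟩ := ih {k // ¬ k = i} hcard R.toBlocks₂₂ (by
        ext a b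
        exact congrFun (congrFun hRh (Sum.inr a)) (Sum.inr b))
      refine ⟨fromBlocks 1 0 0 P, isUnit_fromBlocks_diag hP,
        Sum.elim (fun k => R (Sum.inl k) (Sum.inl k)) d, ?_⟩
      rw [← fromBlocks_toBlocks R, hR12, hR21, fromBlocks_conjTranspose, fromBlocks_multiply,
          fromBlocks_multiply]
      simp only [conjTranspose_one, conjTranspose_zero, Matrix.mul_zero, Matrix.zero_mul,
        Matrix.mul_one, Matrix.one_mul, add_zero, zero_add]
      rw [hd, ← fromBlocks_diagonal]
      congr 1
      ext ⟨a, rfl⟩ ⟨b, hb⟩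
      subst hb
      simp [toBlocks₁₁]
    intro T hT
    by_cases h0 : T = 0
    · exact ⟨1, isUnit_one, 0, by simp [h0]⟩
    by_cases h1 : ∃ i, T i i ≠ 0
    · obtain ⟨i, hi⟩ := h1
      exact key T i hT hi
    push Not at h1
    have : ∃ i j, T i j ≠ 0 := by
      by_contra hcon
      push Not at hcon
      exact h0 (by ext i j; exact hcon i j)
    obtain ⟨i, j, hij⟩ := this
    have hne : i ≠ j := by rintro rfl; exact hij (h1 i)
    obtain ⟨y, hy⟩ := hD
    set c : D := (T i j)⁻¹ * y with hc'
    have hQ : IsUnit (1 + single j i c : Matrix ι ι D) := by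
      have hs : single j i c * single j i c = 0 := by
        rw [single_mul_single_of_ne]; exact hne
      refine ⟨⟨1 + single j i c, 1 - single j i c, ?_, ?_⟩, rfl⟩
      · rw [add_mul, mul_sub, mul_sub, hs]; simp
      · rw [sub_mul, mul_add, mul_add, hs]; simp
    apply Diagable.of_conj hQ
    apply key _ i (herm_conj hT _)
    have hji : T j i = ε • star (T i j) := by
      have := congrFun (congrFun hT j) i
      rw [conjTranspose_apply, Matrix.smul_apply] at this
      rw [this, smul_smul, hε, one_smul]
    have e1 : ((1 + single j i c : Matrix ι ι D)ᴴ * T * (1 + single j i c : Matrix ι ι D)) i i = y + ε • star y := by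
      rw [conjTranspose_add, conjTranspose_single, conjTranspose_one]
      simp only [add_mul, mul_add, Matrix.one_mul, Matrix.mul_one, Matrix.add_apply,
        Matrix.mul_single_apply_same, Matrix.single_mul_apply_same, h1, hji]
      rw [hc']
      simp [hij, mul_assoc]
      rw [(Int.cast_commute ε (star (T i j))).eq, inv_mul_cancel_left₀ (by simpa using hij),
        (Int.cast_commute ε (star y)).eq, add_comm]
    rw [e1]; exact hy

theorem diag_norm (ε : ℤ) (hε : ε * ε = 1) (hD : ∃ y : D, y + ε • star y ≠ 0) (Good : D → Prop)
    (hG : ∀ d : D, d ≠ 0 → star d = ε • d → ∃ c : D, c ≠ 0 ∧ Good (star c * d * c))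
    {ι : Type} [Fintype ι] [DecidableEq ι] (T : Matrix ι ι D) (hT : Tᴴ = ε • T) (hu : IsUnit T) :
    ∃ P : Matrix ι ι D, IsUnit P ∧ ∃ d : ι → D, (∀ i, Good (d i)) ∧ Pᴴ * T * P = diagonal d := by
  obtain ⟨P, hP, d, hd⟩ := diagable_all ε hε hD _ ι rfl T hT
  have hdu : IsUnit (diagonal d) := by
    rw [← hd]
    exact (((isUnit_conjTranspose _).mpr hP).mul hu).mul hP
  have hd0 : ∀ i, d i ≠ 0 := by
    intro i h
    obtain ⟨u, hu⟩ := hdu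
    have := congrFun (congrFun u.mul_inv i) i
    rw [hu, diagonal_mul, h] at this
    simp at this
  have hds : ∀ i, star (d i) = ε • d i := by
    intro i
    have h := herm_conj hT P
    rw [hd] at h
    have := congrFun (congrFun h i) i
    simpa using this
  choose c hc hg using fun i => hG (d i) (hd0 i) (hds i)
  refine ⟨P * diagonal c, hP.mul ?_, fun i => star (c i) * d i * c i, hg, ?_⟩
  · refine ⟨⟨diagonal c, diagonal fun i => (c i)⁻¹, ?_, ?_⟩, rfl⟩ <;> simp [hc]
  · rw [conjTranspose_mul]
    have : (diagonal c)ᴴ * Pᴴ * T * (P * diagonal c) = (diagonal c)ᴴ * (Pᴴ * T * P) * diagonal c := by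
      simp only [Matrix.mul_assoc]
    rw [this, hd]
    simp [diagonal_conjTranspose]

theorem diag_sorted (hD : (2 : D) ≠ 0)
    (hG : ∀ d : D, d ≠ 0 → star d = d → ∃ c : D, c ≠ 0 ∧ (star c * d * c = 1 ∨ star c * d * c = -1))
    (n : ℕ) (T : Matrix (Fin n) (Fin n) D) (hT : Tᴴ = T) (hu : IsUnit T) :
    ∃ p q, p + q = n ∧ ∃ P : Matrix (Fin n) (Fin n) D, IsUnit P ∧
      Pᴴ * T * P = diagonal fun k : Fin n => if (k : ℕ) < p then 1 else -1 := by
  classical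
  obtain ⟨P, hP, d, hd, hPd⟩ := diag_norm (1 : ℤ) (by simp)
    ⟨(1 : D), by simpa [one_add_one_eq_two] using hD⟩ (fun d => d = 1 ∨ d = -1)
    (fun d h0 h1 => hG d h0 (by simpa using h1)) T (by simpa using hT) hu
  set p := Fintype.card {i // d i = 1} with hp
  have hpn : p ≤ n := by
    have := Fintype.card_subtype_le (fun i => d i = 1)
    simpa using this
  have hcard : Fintype.card {k : Fin n // (k : ℕ) < p} = Fintype.card {i // d i = 1} := by
    rw [← hp]
    rw [Fintype.card_subtype]
    have := Fin.card_filter_val_lt (n := n) (m := p)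
    rw [this]; omega
  let e0 := Fintype.equivOfCardEq hcard
  let e := e0.extendSubtype
  refine ⟨p, n - p, by omega, P.submatrix id e, ?_, ?_⟩
  · have : P.submatrix id e = P * (1 : Matrix _ _ D).submatrix id e := by
      ext i j; simp [Matrix.mul_apply, Matrix.one_apply]
    rw [this]
    refine hP.mul ⟨⟨(1 : Matrix _ _ D).submatrix id e, (1 : Matrix _ _ D).submatrix e id, ?_, ?_⟩, rfl⟩
    · rw [Matrix.submatrix_mul_equiv]; simp
    · ext i j; simp [Matrix.mul_apply, Matrix.one_apply]
  · have : (P.submatrix id e)ᴴ * T * P.submatrix id e = (Pᴴ * T * P).submatrix e e := by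
      ext i j; simp [Matrix.mul_apply]
    rw [this, hPd, submatrix_diagonal_equiv]
    congr 1
    ext k
    by_cases hk : (k : ℕ) < p
    · have := e0.extendSubtype_mem k hk
      simp only [Function.comp, hk, if_true]; exact this
    · have := e0.extendSubtype_not_mem k hk
      simp only [Function.comp, hk, if_false]; exact (hd _).resolve_left this
end diag


theorem sympl_basis (m : ℕ) : ∀ (V : Type) [AddCommGroup V] [Module ℝ V] [FiniteDimensional ℝ V]
    (B : V →ₗ[ℝ] V →ₗ[ℝ] ℝ), (∀ v, B v v = 0) → (∀ v, (∀ w, B v w = 0) → v = 0) →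
    Module.finrank ℝ V = 2 * m →
    ∃ e f : Fin m → V, (∀ i j, B (e i) (e j) = 0) ∧ (∀ i j, B (f i) (f j) = 0) ∧
      (∀ i j, B (e i) (f j) = if i = j then -1 else 0) := by
  induction m with
  | zero =>
    intro V _ _ _ B _ _ _
    exact ⟨Fin.elim0, Fin.elim0, fun i => i.elim0, fun i => i.elim0, fun i => i.elim0⟩
  | succ m ih =>
    intro V _ _ _ B hB hnd hV
    have hsk : ∀ v w, B v w = - B w v := by
      intro v w
      have := hB (v + w)
      simp only [map_add, LinearMap.add_apply, hB] at this
      linarith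
    have : Nontrivial V := by
      apply Module.nontrivial_of_finrank_pos (R := ℝ); omega
    obtain ⟨a, ha⟩ := exists_ne (0 : V)
    obtain ⟨b, hb⟩ : ∃ b, B a b ≠ 0 := by
      by_contra h; push Not at h; exact ha (hnd a h)
    obtain ⟨b, hb⟩ : ∃ b, B a b = -1 := ⟨(-(B a b)⁻¹) • b, by simp [hb]⟩
    have hba : B b a = 1 := by rw [hsk, hb]; simp
    let L : V →ₗ[ℝ] ℝ × ℝ := (B a).prod (B b)
    let W := LinearMap.ker L
    have hW : ∀ w ∈ W, B a w = 0 ∧ B b w = 0 := by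
      intro w hw
      simpa [W, L, LinearMap.mem_ker] using hw
    have hsurj : LinearMap.range L = ⊤ := by
      rw [LinearMap.range_eq_top]
      rintro ⟨s, t⟩
      refine ⟨(-s) • b + t • a, ?_⟩
      simp [L, hB, hb, hba]
    have hfr : Module.finrank ℝ W = 2 * m := by
      have := LinearMap.finrank_range_add_finrank_ker L
      rw [hsurj, finrank_top, hV] at this
      simp at this
      change 1 + 1 + Module.finrank ℝ W = _ at this
      omega
    obtain ⟨e, f, h1, h2, h3⟩ := ih W (B.domRestrict₁₂ W W) (fun v => hB v) (by
      intro v hv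
      apply Subtype.ext
      apply hnd
      intro w
      have hmem : w + (B a w) • b - (B b w) • a ∈ W := by
        simp [W, L, LinearMap.mem_ker, hB, hb, hba]
      have := hv ⟨_, hmem⟩
      simp only [LinearMap.domRestrict₁₂_apply, map_add, map_sub, map_smul] at this
      rw [hsk v a, hsk v b, (hW v v.2).1, (hW v v.2).2] at this
      simpa using this) hfr
    simp only [LinearMap.domRestrict₁₂_apply] at h1 h2 h3
    refine ⟨Fin.cons a (fun i => e i), Fin.cons b (fun i => f i), ?_, ?_, ?_⟩
    · intro i j
      refine Fin.cases ?_ (fun i => ?_) i <;> refine Fin.cases ?_ (fun j => ?_) j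
      · simp [hB]
      · simpa using (hW _ (e j).2).1
      · simp [hsk (e i) a, (hW _ (e i).2).1]
      · simpa using h1 i j
    · intro i j
      refine Fin.cases ?_ (fun i => ?_) i <;> refine Fin.cases ?_ (fun j => ?_) j
      · simp [hB]
      · simpa using (hW _ (f j).2).2
      · simp [hsk (f i) b, (hW _ (f i).2).2]
      · simpa using h2 i j
    · intro i j
      refine Fin.cases ?_ (fun i => ?_) i <;> refine Fin.cases ?_ (fun j => ?_) j
      · simp [hb]
      · simpa [(Fin.succ_ne_zero j).symm] using (hW _ (f j).2).1
      · simp [hsk (e i) b, (hW _ (e i).2).2]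
      · simpa using h3 i j

theorem sympl_mat (m : ℕ) (T : Matrix (Fin m ⊕ Fin m) (Fin m ⊕ Fin m) ℝ) (hT : Tᵀ = -T)
    (hu : IsUnit T) : ∃ P : Matrix (Fin m ⊕ Fin m) (Fin m ⊕ Fin m) ℝ, IsUnit P ∧
      Pᵀ * T * P = fromBlocks 0 (-1) 1 0 := by
  have hd : IsUnit T.det := (isUnit_iff_isUnit_det T).mp hu
  let Bf : (Fin m ⊕ Fin m → ℝ) →ₗ[ℝ] (Fin m ⊕ Fin m → ℝ) →ₗ[ℝ] ℝ := Matrix.toLinearMap₂' ℝ T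
  have happ : ∀ v w, Bf v w = v ⬝ᵥ T *ᵥ w := fun v w =>
    Matrix.toLinearMap₂'_apply' T v w
  have hsk : ∀ v w, Bf v w = - Bf w v := by
    intro v w
    rw [happ, happ, dotProduct_mulVec, ← mulVec_transpose, hT, neg_mulVec, neg_dotProduct,
      dotProduct_comm]
  obtain ⟨e, f, h1, h2, h3⟩ := sympl_basis m (Fin m ⊕ Fin m → ℝ) Bf (by
      intro v; have := hsk v v; linarith) (by
      intro v hv
      have : v ᵥ* T = 0 := by
        ext i
        have := hv (Pi.single i 1)
        rw [happ, dotProduct_mulVec] at this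
        simpa using this
      have h2 := congrArg (fun z => z ᵥ* T⁻¹) this
      simpa [vecMul_vecMul, Matrix.mul_nonsing_inv T hd] using h2) (by
      simp; ring)
  set P : Matrix (Fin m ⊕ Fin m) (Fin m ⊕ Fin m) ℝ := of fun i j => Sum.elim e f j i with hP
  have hent : ∀ i j, (Pᵀ * T * P) i j = Bf (Sum.elim e f i) (Sum.elim e f j) := by
    intro i j
    rw [happ, Matrix.mul_assoc]
    rfl
  have hPT : Pᵀ * T * P = fromBlocks 0 (-1) 1 0 := by
    ext i j
    rw [hent]
    rcases i with i | i <;> rcases j with j | j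
    · simpa using h1 i j
    · simp [h3, Matrix.one_apply]; split_ifs <;> simp
    · simp only [Sum.elim_inl, Sum.elim_inr]
      rw [hsk, h3]; simp [Matrix.one_apply, eq_comm]; split_ifs <;> simp
    · simpa using h2 i j
  refine ⟨P, ?_, hPT⟩
  have hJ : (fromBlocks 0 1 (-1) 0 : Matrix (Fin m ⊕ Fin m) (Fin m ⊕ Fin m) ℝ) * (Pᵀ * T * P) = 1 := by
    rw [hPT, fromBlocks_multiply]; simp
  rw [← Matrix.mul_assoc] at hJ
  exact IsUnit.of_mul_eq_one_right _ hJ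

open Quaternion in
/-- the standard embedding -/
noncomputable def Phi {m : ℕ} (x : Matrix (Fin m) (Fin m) ℍ[ℝ]) :
    Matrix (Fin m ⊕ Fin m) (Fin m ⊕ Fin m) ℂ :=
  fromBlocks (of fun i j => ⟨(x i j).re, (x i j).imI⟩) (of fun i j => ⟨-(x i j).imJ, -(x i j).imK⟩)
    (of fun i j => ⟨(x i j).imJ, -(x i j).imK⟩) (of fun i j => ⟨(x i j).re, -(x i j).imI⟩)

open Quaternion in
/-- the inverse of the standard embedding -/
noncomputable def Psi {m : ℕ} (x : Matrix (Fin m ⊕ Fin m) (Fin m ⊕ Fin m) ℂ) :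
    Matrix (Fin m) (Fin m) ℍ[ℝ] :=
  of fun i j => ⟨(x (.inl i) (.inl j)).re, (x (.inl i) (.inl j)).im,
    (x (.inr i) (.inl j)).re, -(x (.inr i) (.inl j)).im⟩

lemma Psi_re {m : ℕ} (x : Matrix (Fin m ⊕ Fin m) (Fin m ⊕ Fin m) ℂ) (i j) :
    (Psi x i j).re = (x (.inl i) (.inl j)).re := rfl
lemma Psi_imI {m : ℕ} (x : Matrix (Fin m ⊕ Fin m) (Fin m ⊕ Fin m) ℂ) (i j) :
    (Psi x i j).imI = (x (.inl i) (.inl j)).im := rfl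
lemma Psi_imJ {m : ℕ} (x : Matrix (Fin m ⊕ Fin m) (Fin m ⊕ Fin m) ℂ) (i j) :
    (Psi x i j).imJ = (x (.inr i) (.inl j)).re := rfl
lemma Psi_imK {m : ℕ} (x : Matrix (Fin m ⊕ Fin m) (Fin m ⊕ Fin m) ℂ) (i j) :
    (Psi x i j).imK = -(x (.inr i) (.inl j)).im := rfl

open Quaternion in
lemma q_sum_re {ι : Type} (s : Finset ι) (f : ι → ℍ[ℝ]) : (∑ i ∈ s, f i).re = ∑ i ∈ s, (f i).re := by
  classical
  induction s using Finset.induction_on with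
  | empty => simp
  | insert a s ha ih => simp [Finset.sum_insert ha, ih]

open Quaternion in
lemma q_sum_imI {ι : Type} (s : Finset ι) (f : ι → ℍ[ℝ]) : (∑ i ∈ s, f i).imI = ∑ i ∈ s, (f i).imI := by
  classical
  induction s using Finset.induction_on with
  | empty => simp
  | insert a s ha ih => simp [Finset.sum_insert ha, ih]

open Quaternion in
lemma q_sum_imJ {ι : Type} (s : Finset ι) (f : ι → ℍ[ℝ]) : (∑ i ∈ s, f i).imJ = ∑ i ∈ s, (f i).imJ := by
  classical
  induction s using Finset.induction_on with
  | empty => simp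
  | insert a s ha ih => simp [Finset.sum_insert ha, ih]

open Quaternion in
lemma q_sum_imK {ι : Type} (s : Finset ι) (f : ι → ℍ[ℝ]) : (∑ i ∈ s, f i).imK = ∑ i ∈ s, (f i).imK := by
  classical
  induction s using Finset.induction_on with
  | empty => simp
  | insert a s ha ih => simp [Finset.sum_insert ha, ih]

open Quaternion in
lemma Phi_mul {m : ℕ} (x y : Matrix (Fin m) (Fin m) ℍ[ℝ]) : Phi (x * y) = Phi x * Phi y := by
  unfold Phi
  rw [fromBlocks_multiply]
  congr 1 <;>
  · ext i j
    simp only [of_apply, Matrix.mul_apply, Matrix.add_apply]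
    rw [← Finset.sum_add_distrib]
    apply Complex.ext
    · simp only [Complex.re_sum, q_sum_re, q_sum_imI, q_sum_imJ, q_sum_imK, ← Finset.sum_neg_distrib]
      refine Finset.sum_congr rfl fun k _ => ?_
      simp
      try ring
    · simp only [Complex.im_sum, q_sum_re, q_sum_imI, q_sum_imJ, q_sum_imK, ← Finset.sum_neg_distrib]
      refine Finset.sum_congr rfl fun k _ => ?_
      simp
      try ring

open Quaternion in
lemma Phi_diagonal {m : ℕ} (d : Fin m → ℍ[ℝ]) : Phi (diagonal d) =
    fromBlocks (diagonal fun i => ⟨(d i).re, (d i).imI⟩) (diagonal fun i => ⟨-(d i).imJ, -(d i).imK⟩)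
    (diagonal fun i => ⟨(d i).imJ, -(d i).imK⟩) (diagonal fun i => ⟨(d i).re, -(d i).imI⟩) := by
  unfold Phi
  congr 1 <;>
  · ext i j
    by_cases h : i = j
    · subst h; simp
    · simp [h]; rfl

open Quaternion in
lemma Phi_one {m : ℕ} : Phi (1 : Matrix (Fin m) (Fin m) ℍ[ℝ]) = 1 := by
  rw [← diagonal_one, Phi_diagonal, ← fromBlocks_one, ← diagonal_one, ← diagonal_zero]
  congr 1 <;>
  · congr 1; ext i; apply Complex.ext <;> simp

open Quaternion in
lemma Phi_star {m : ℕ} (x : Matrix (Fin m) (Fin m) ℍ[ℝ]) : Phi xᴴ = (Phi x)ᴴ := by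
  unfold Phi
  rw [fromBlocks_conjTranspose]
  congr 1 <;>
  · ext i j; apply Complex.ext <;> simp

open Quaternion in
lemma Phi_neg {m : ℕ} (x : Matrix (Fin m) (Fin m) ℍ[ℝ]) : Phi (-x) = -(Phi x) := by
  unfold Phi
  rw [fromBlocks_neg]
  congr 1 <;>
  · ext i j; apply Complex.ext <;> simp

open Quaternion in
lemma Psi_Phi {m : ℕ} (x : Matrix (Fin m) (Fin m) ℍ[ℝ]) : Psi (Phi x) = x := by
  ext i j <;> simp [Phi, Psi_re, Psi_imI, Psi_imJ, Psi_imK]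

lemma Phi_inj {m : ℕ} : Function.Injective (Phi (m := m)) :=
  Function.LeftInverse.injective Psi_Phi

lemma Phi_Psi {m : ℕ} (x : Matrix (Fin m ⊕ Fin m) (Fin m ⊕ Fin m) ℂ) (hx : IsQuatMat m x) :
    Phi (Psi x) = x := by
  unfold IsQuatMat Jc at hx
  rw [← fromBlocks_toBlocks x, fromBlocks_map, fromBlocks_multiply, fromBlocks_multiply,
    fromBlocks_inj] at hx
  obtain ⟨h1, h2, h3, h4⟩ := hx
  ext i j
  rcases i with i | i <;> rcases j with j | j
  · apply Complex.ext <;> simp [Phi, Psi_re, Psi_imI, Psi_imJ, Psi_imK]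
  · have := congrFun (congrFun h1 i) j
    simp [toBlocks₁₂, toBlocks₂₁] at this
    rw [this]
    apply Complex.ext <;> simp [Phi, Psi_re, Psi_imI, Psi_imJ, Psi_imK]
  · apply Complex.ext <;> simp [Phi, Psi_re, Psi_imI, Psi_imJ, Psi_imK]
  · have := congrFun (congrFun h3 i) j
    simp [toBlocks₂₂, toBlocks₁₁] at this
    rw [this]
    apply Complex.ext <;> simp [Phi, Psi_re, Psi_imI, Psi_imJ, Psi_imK]

lemma Jc_sq (m : ℕ) : Jc m * Jc m = -1 := by
  unfold Jc
  rw [fromBlocks_multiply, ← fromBlocks_one, fromBlocks_neg]; simp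

lemma Jc_T (m : ℕ) : (Jc m)ᵀ = -Jc m := by
  unfold Jc
  rw [fromBlocks_transpose, fromBlocks_neg]; simp

lemma Jc_conj (m : ℕ) : (Jc m).map (starRingEnd ℂ) = Jc m := by
  unfold Jc
  rw [fromBlocks_map]
  congr 1 <;>
  · ext i j; simp [Matrix.one_apply]; try split_ifs <;> simp

lemma Jc_H (m : ℕ) : (Jc m)ᴴ = -Jc m := by
  unfold Jc
  rw [fromBlocks_conjTranspose, fromBlocks_neg]; simp

lemma IsQuatMat_Phi {m : ℕ} (x : Matrix (Fin m) (Fin m) (Quaternion ℝ)) : IsQuatMat m (Phi x) := by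
  unfold IsQuatMat Jc Phi
  rw [fromBlocks_map, fromBlocks_multiply, fromBlocks_multiply]
  congr 1 <;>
  · ext i j; apply Complex.ext <;> simp

lemma exists_alpha {ι : Type} [Fintype ι] [DecidableEq ι] (S S' : Matrix ι ι ℂ) (hS : IsUnit S) :
    ∃ a : ℂ, IsUnit (a • S + (starRingEnd ℂ a) • S') := by
  let A : Matrix ι ι ℂ := (1 / 2 : ℂ) • (S + S')
  let B : Matrix ι ι ℂ := (-Complex.I / 2) • (S - S')
  let p : Polynomial ℂ := (A.map Polynomial.C + (Polynomial.X : Polynomial ℂ) • B.map Polynomial.C).det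
  have hp : ∀ z, p.eval z = (A + z • B).det := by
    intro z
    change Polynomial.evalRingHom z p = _
    rw [RingHom.map_det]
    congr 1
    ext i j
    simp
    ring
  have hp0 : p ≠ 0 := by
    intro h
    have h1 := hp Complex.I
    have h2 : A + Complex.I • B = S := by
      ext i j
      simp [A, B]
      linear_combination (-(1:ℂ)/2) * (S i j - S' i j) * Complex.I_mul_I
    rw [h2, h] at h1
    have := (isUnit_iff_isUnit_det S).mp hS
    rw [← h1] at this
    simp at this
  obtain ⟨t, ht⟩ : ∃ t : ℝ, p.eval (t : ℂ) ≠ 0 := by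
    by_contra hcon
    push Not at hcon
    apply hp0
    apply Polynomial.eq_zero_of_infinite_isRoot
    apply Set.Infinite.mono (s := Set.range (fun t : ℝ => (t : ℂ)))
    · rintro _ ⟨t, rfl⟩; exact hcon t
    · exact Set.infinite_range_of_injective Complex.ofReal_injective
  refine ⟨1 / 2 - Complex.I * t / 2, ?_⟩
  rw [isUnit_iff_isUnit_det, isUnit_iff_ne_zero]
  rw [hp] at ht
  convert ht using 2
  ext i j
  simp [A, B, Complex.conj_ofNat]
  ring

lemma pres_of_conj {ι : Type} [Fintype ι] [DecidableEq ι] {g x K : Matrix ι ι ℂ} (hg : IsUnit g)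
    (h : (g * x * g⁻¹)ᵀ * K * (g * x * g⁻¹) = K) : xᵀ * (gᵀ * K * g) * x = gᵀ * K * g := by
  have hd := (isUnit_iff_isUnit_det g).mp hg
  have h2 : g * x = (g * x * g⁻¹) * g := by rw [nonsing_inv_mul_cancel_right _ _ hd]
  have : xᵀ * (gᵀ * K * g) * x = (g * x)ᵀ * K * (g * x) := by
    rw [transpose_mul]; simp only [Matrix.mul_assoc]
  rw [this, h2, transpose_mul]
  calc _ = gᵀ * ((g * x * g⁻¹)ᵀ * K * (g * x * g⁻¹)) * g := by simp only [Matrix.mul_assoc]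
    _ = _ := by rw [h]

/-- transport of a preserved form -/
lemma pres_conj {ι : Type} [Fintype ι] [DecidableEq ι] (s : Matrix ι ι ℂ → Matrix ι ι ℂ)
    (hs : ∀ a b, s (a * b) = s b * s a) {h x T K : Matrix ι ι ℂ} (hh : IsUnit h)
    (hK : s h * T * h = K) (hx : s x * T * x = T) :
    s (h⁻¹ * x * h) * K * (h⁻¹ * x * h) = K := by
  have hd := (isUnit_iff_isUnit_det h).mp hh
  have h2 : h * (h⁻¹ * x * h) = x * h := by
    rw [Matrix.mul_assoc, mul_nonsing_inv_cancel_left _ _ hd]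
  calc _ = s (h * (h⁻¹ * x * h)) * T * (h * (h⁻¹ * x * h)) := by
        rw [← hK, hs h]; simp only [Matrix.mul_assoc]
    _ = s h * (s x * T * x) * h := by rw [h2, hs]; simp only [Matrix.mul_assoc]
    _ = K := by rw [hx, hK]

lemma real_iff {ι : Type} (x : Matrix ι ι ℂ) : IsRealMat x ↔ ∃ y : Matrix ι ι ℝ, y.map Complex.ofRealHom = x := by
  constructor
  · intro h
    refine ⟨x.map Complex.re, ?_⟩
    ext i j
    apply Complex.ext <;> simp [h i j]
  · rintro ⟨y, rfl⟩ i j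
    simp

lemma real_conj {ι : Type} [Fintype ι] [DecidableEq ι] {x : Matrix ι ι ℂ} (hx : IsRealMat x)
    {P : Matrix ι ι ℝ} (hP : IsUnit P) :
    IsRealMat ((P.map Complex.ofRealHom)⁻¹ * x * P.map Complex.ofRealHom) := by
  obtain ⟨y, rfl⟩ := (real_iff x).mp hx
  rw [real_iff]
  refine ⟨P⁻¹ * y * P, ?_⟩
  have hd := (isUnit_iff_isUnit_det P).mp hP
  rw [Matrix.map_mul, Matrix.map_mul]
  congr 2
  symm
  apply inv_eq_left_inv
  rw [← Matrix.map_mul, nonsing_inv_mul _ hd]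
  simp

lemma isUnit_map_real {ι : Type} [Fintype ι] [DecidableEq ι] {P : Matrix ι ι ℝ} (hP : IsUnit P) :
    IsUnit (P.map Complex.ofRealHom) :=
  hP.map (Complex.ofRealHom.mapMatrix)

/-- real case: descent to a real form -/
lemma real_descent {ι : Type} [Fintype ι] [DecidableEq ι] (δ : ℤ) (S : Matrix ι ι ℂ) (hS : IsUnit S)
    (hδ : Sᵀ = δ • S) : ∃ T : Matrix ι ι ℝ, IsUnit T ∧ Tᵀ = δ • T ∧
      ∀ x, IsRealMat x → xᵀ * S * x = S →
        xᵀ * T.map Complex.ofRealHom * x = T.map Complex.ofRealHom := by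
  set S' := S.map (starRingEnd ℂ) with hS'
  obtain ⟨a, ha⟩ := exists_alpha S S' hS
  set M := a • S + (starRingEnd ℂ a) • S' with hM
  have hMr : IsRealMat M := by
    intro i j; simp [hM, hS']; ring
  obtain ⟨T, hT⟩ := (real_iff M).mp hMr
  have hS't : S'ᵀ = δ • S' := by
    rw [hS', ← Matrix.transpose_map, hδ]; ext i j; simp only [map_apply, Matrix.smul_apply, map_zsmul]
  have hMt : Mᵀ = δ • M := by
    rw [hM, transpose_add, transpose_smul, transpose_smul, hδ, hS't, smul_add, smul_comm a,
      smul_comm _ δ]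
  refine ⟨T, ?_, ?_, ?_⟩
  · rw [isUnit_iff_isUnit_det, isUnit_iff_ne_zero]
    intro h0
    rw [← hT, isUnit_iff_isUnit_det, ← RingHom.mapMatrix_apply, ← RingHom.map_det, h0] at ha
    simp at ha
  · ext i j
    have := congrFun (congrFun hMt i) j
    rw [← hT] at this
    simp only [transpose_apply, Matrix.smul_apply, map_apply] at this ⊢
    rw [← map_zsmul] at this
    exact Complex.ofReal_injective this
  · intro x hx hxS
    have hxc : x.map (starRingEnd ℂ) = x := by
      ext i j; exact Complex.conj_eq_iff_im.mpr (hx i j)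
    have h2 : xᵀ * S' * x = S' := by
      have := congrArg (fun z => z.map (starRingEnd ℂ)) hxS
      simp only [Matrix.map_mul, Matrix.transpose_map, hxc] at this
      exact this
    rw [hT, hM, Matrix.mul_add, Matrix.add_mul, Matrix.mul_smul, Matrix.mul_smul, Matrix.smul_mul,
      Matrix.smul_mul, hxS, h2]

lemma map_H_eq {ι : Type} (M : Matrix ι ι ℂ) : Mᴴ = (M.map (starRingEnd ℂ))ᵀ := rfl

lemma quat_inv {m : ℕ} {x : Matrix (Fin m ⊕ Fin m) (Fin m ⊕ Fin m) ℂ} (hx : IsQuatMat m x)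
    (hu : IsUnit x) : IsQuatMat m x⁻¹ := by
  unfold IsQuatMat at *
  have hd := (isUnit_iff_isUnit_det x).mp hu
  have h1 : x.map (starRingEnd ℂ) * (x⁻¹).map (starRingEnd ℂ) = 1 := by
    rw [← Matrix.map_mul, mul_nonsing_inv _ hd]; simp
  calc x⁻¹ * Jc m = x⁻¹ * (Jc m * x.map (starRingEnd ℂ)) * (x⁻¹).map (starRingEnd ℂ) := by
        rw [← Matrix.mul_assoc, Matrix.mul_assoc _ (x.map _), h1, Matrix.mul_one]
    _ = _ := by rw [← hx, nonsing_inv_mul_cancel_left _ _ hd]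

lemma quat_conj {m : ℕ} {x : Matrix (Fin m ⊕ Fin m) (Fin m ⊕ Fin m) ℂ} (hx : IsQuatMat m x)
    {h : Matrix (Fin m ⊕ Fin m) (Fin m ⊕ Fin m) ℂ} (hh : IsQuatMat m h) (hu : IsUnit h) :
    IsQuatMat m (h⁻¹ * x * h) := by
  rw [← Phi_Psi x hx, ← Phi_Psi _ (quat_inv hh hu)]
  nth_rewrite 2 [← Phi_Psi h hh]
  rw [← Phi_mul, ← Phi_mul]
  exact IsQuatMat_Phi _

lemma isUnit_Phi {m : ℕ} {P : Matrix (Fin m) (Fin m) (Quaternion ℝ)} (hP : IsUnit P) :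
    IsUnit (Phi P) := by
  obtain ⟨u, rfl⟩ := hP
  refine ⟨⟨Phi u, Phi ((u⁻¹ : (Matrix (Fin m) (Fin m) (Quaternion ℝ))ˣ) :
    Matrix (Fin m) (Fin m) (Quaternion ℝ)), ?_, ?_⟩, rfl⟩
  · rw [← Phi_mul, Units.mul_inv, Phi_one]
  · rw [← Phi_mul, Units.inv_mul, Phi_one]

lemma quat_descent {m : ℕ} (δ : ℤ) (S : Matrix (Fin m ⊕ Fin m) (Fin m ⊕ Fin m) ℂ) (hS : IsUnit S)
    (hδ : Sᵀ = δ • S) : ∃ T : Matrix (Fin m) (Fin m) (Quaternion ℝ), IsUnit T ∧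
      (Phi T)ᴴ = (-δ) • Phi T ∧
      ∀ x, IsQuatMat m x → xᵀ * S * x = S → xᴴ * Phi T * x = Phi T := by
  set J := Jc m with hJ
  have hJJ : J * J = -1 := Jc_sq m
  have hJJl : ∀ z, J * (J * z) = -z := fun z => by rw [← Matrix.mul_assoc, hJJ]; simp
  have hJT : Jᵀ = -J := Jc_T m
  have hJc : J.map (starRingEnd ℂ) = J := Jc_conj m
  set S₁ := S.map (starRingEnd ℂ) with hS₁
  set S' := -(J * S₁ * J) with hS'
  obtain ⟨a, ha⟩ := exists_alpha S S' hS
  set M := a • S + (starRingEnd ℂ a) • S' with hM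
  have hS₁t : S₁ᵀ = δ • S₁ := by
    rw [hS₁, ← Matrix.transpose_map, hδ]; ext i j; simp only [map_apply, Matrix.smul_apply, map_zsmul]
  have hS't : S'ᵀ = δ • S' := by
    rw [hS', transpose_neg, transpose_mul, transpose_mul, hJT, hS₁t]
    simp only [Matrix.mul_smul, Matrix.smul_mul, Matrix.neg_mul, Matrix.mul_neg, neg_neg, smul_neg,
      Matrix.mul_assoc]
  have hMt : Mᵀ = δ • M := by
    rw [hM, transpose_add, transpose_smul, transpose_smul, hδ, hS't, smul_add, smul_comm a,
      smul_comm _ δ]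
  have hMc : M.map (starRingEnd ℂ) = -(J * M * J) := by
    have e1 : S'.map (starRingEnd ℂ) = -(J * S * J) := by
      have : S₁.map (starRingEnd ℂ) = S := by ext i j; simp [hS₁]
      have h3 : S'.map (starRingEnd ℂ) = -((J * S₁ * J).map (starRingEnd ℂ)) := by
        rw [hS']; exact Matrix.map_neg _ (map_neg _) _
      rw [h3, Matrix.map_mul, Matrix.map_mul, hJc, this]
    have e2 : M.map (starRingEnd ℂ) = (starRingEnd ℂ a) • S₁ + a • S'.map (starRingEnd ℂ) := by
      ext i j; simp [hM, hS₁]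
    have e3 : J * S' * J = -S₁ := by
      rw [hS']
      simp only [Matrix.mul_neg, Matrix.neg_mul, Matrix.mul_assoc, hJJl, hJJ]
      simp
    rw [e2, e1, hM, Matrix.mul_add, Matrix.add_mul, Matrix.mul_smul, Matrix.mul_smul,
      Matrix.smul_mul, Matrix.smul_mul, e3]
    simp [add_comm]
  have hpres : ∀ x, IsQuatMat m x → xᵀ * S * x = S →
      xᵀ * M * x = M ∧ J * xᵀ = (x.map (starRingEnd ℂ))ᵀ * J := by
    intro x hx hxS
    unfold IsQuatMat at hx
    rw [← hJ] at hx
    set y := x.map (starRingEnd ℂ) with hy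
    have hyt : J * xᵀ = yᵀ * J := by
      have := congrArg transpose hx
      rw [transpose_mul, transpose_mul, hJT] at this
      simp only [Matrix.mul_neg, Matrix.neg_mul, neg_inj] at this
      exact this
    have hyt' : xᵀ * J = J * yᵀ := by
      have := congrArg (fun z => J * z * J) hyt
      simp only [Matrix.mul_assoc, hJJl, hJJ] at this
      simpa using this
    have hyx : J * x = y * J := by
      have := congrArg (fun z => J * z * J) hx
      simp only [Matrix.mul_assoc, hJJl, hJJ] at this
      simpa using this
    have hyS : yᵀ * S₁ * y = S₁ := by
      have := congrArg (fun z => z.map (starRingEnd ℂ)) hxS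
      simp only [Matrix.map_mul, Matrix.transpose_map] at this
      exact this
    have h2 : xᵀ * S' * x = S' := by
      rw [hS', Matrix.mul_neg, Matrix.neg_mul]
      congr 1
      calc xᵀ * (J * S₁ * J) * x = (xᵀ * J) * S₁ * (J * x) := by simp only [Matrix.mul_assoc]
        _ = J * (yᵀ * S₁ * y) * J := by rw [hyt', hyx]; simp only [Matrix.mul_assoc]
        _ = _ := by rw [hyS]
    refine ⟨?_, hyt⟩
    rw [hM, Matrix.mul_add, Matrix.add_mul, Matrix.mul_smul, Matrix.mul_smul, Matrix.smul_mul,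
      Matrix.smul_mul, hxS, h2]
  set N := -(J * M) with hN
  have hNq : IsQuatMat m N := by
    unfold IsQuatMat
    rw [← hJ]
    have : N.map (starRingEnd ℂ) = -((J * M).map (starRingEnd ℂ)) := by
      rw [hN]; exact Matrix.map_neg _ (map_neg _) _
    rw [this, Matrix.map_mul, hJc, hMc, hN]
    simp only [Matrix.mul_neg, Matrix.neg_mul, Matrix.mul_assoc, hJJl, neg_neg]
  have hNu : IsUnit N := by
    have hJu : IsUnit J := IsUnit.of_mul_eq_one (-J) (by rw [mul_neg, hJJ, neg_neg])
    exact (hJu.mul ha).neg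
  have hPN : Phi (Psi N) = N := Phi_Psi _ hNq
  have hd := (isUnit_iff_isUnit_det N).mp hNu
  refine ⟨Psi N, ?_, ?_, ?_⟩
  · have hq := quat_inv hNq hNu
    refine ⟨⟨Psi N, Psi N⁻¹, ?_, ?_⟩, rfl⟩ <;> apply Phi_inj <;>
      rw [Phi_mul, hPN, Phi_Psi _ hq, Phi_one]
    · exact mul_nonsing_inv _ hd
    · exact nonsing_inv_mul _ hd
  · rw [hPN, hN, conjTranspose_neg, conjTranspose_mul, hJ, Jc_H, ← hJ, map_H_eq, hMc,
      transpose_neg, transpose_mul, transpose_mul, hJT, hMt]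
    simp only [Matrix.mul_smul, Matrix.smul_mul, Matrix.neg_mul, Matrix.mul_neg, neg_neg, smul_neg,
      Matrix.mul_assoc, hJJl, hJJ, neg_smul]
    simp
  · intro x hx hxS
    obtain ⟨h1, h2⟩ := hpres x hx hxS
    rw [hPN, hN, map_H_eq, Matrix.mul_neg, Matrix.neg_mul]
    congr 1
    rw [← Matrix.mul_assoc, ← h2, Matrix.mul_assoc, Matrix.mul_assoc, ← Matrix.mul_assoc xᵀ, h1]

lemma real_scale (r : ℝ) (h : r ≠ 0) : ∃ c : ℝ, c ≠ 0 ∧ (c * r * c = 1 ∨ c * r * c = -1) := by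
  have h1 : 0 < |r| := abs_pos.mpr h
  have h2 : Real.sqrt |r| ≠ 0 := (Real.sqrt_pos.mpr h1).ne'
  have h3 : Real.sqrt |r| * Real.sqrt |r| = |r| := Real.mul_self_sqrt h1.le
  refine ⟨(Real.sqrt |r|)⁻¹, inv_ne_zero h2, ?_⟩
  have h4 : (Real.sqrt |r|)⁻¹ * r * (Real.sqrt |r|)⁻¹ = r / |r| := by
    rw [div_eq_mul_inv, show |r|⁻¹ = (Real.sqrt |r|)⁻¹ * (Real.sqrt |r|)⁻¹ by rw [← mul_inv, h3]]; ring
  rw [h4]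
  rcases abs_choice r with h | h <;> rw [h]
  · left; field_simp
  · right; field_simp

open Quaternion in
lemma quat_scale (d : ℍ[ℝ]) (h : d ≠ 0) (hs : star d = d) :
    ∃ c : ℍ[ℝ], c ≠ 0 ∧ (star c * d * c = 1 ∨ star c * d * c = -1) := by
  obtain ⟨r, rfl⟩ : ∃ r : ℝ, (r : ℍ[ℝ]) = d := ⟨d.re, (Quaternion.star_eq_self.mp hs).symm⟩
  obtain ⟨c, hc, hc'⟩ := real_scale r (by rintro rfl; simp at h)
  refine ⟨c, fun h0 => hc (by have := congrArg QuaternionAlgebra.re h0; simpa using this), ?_⟩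
  rw [Quaternion.star_coe]
  rcases hc' with hc' | hc'
  · left; exact_mod_cast congrArg (fun z : ℝ => (z : ℍ[ℝ])) hc'
  · right; rw [← Quaternion.coe_mul, ← Quaternion.coe_mul, hc']; simp

/-- the unit i -/
noncomputable def qI : Quaternion ℝ := ⟨0, 1, 0, 0⟩
/-- the unit j -/
noncomputable def qJ : Quaternion ℝ := ⟨0, 0, 1, 0⟩
@[simp] lemma qI_re : qI.re = 0 := rfl
@[simp] lemma qI_imI : qI.imI = 1 := rfl
@[simp] lemma qI_imJ : qI.imJ = 0 := rfl
@[simp] lemma qI_imK : qI.imK = 0 := rfl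
@[simp] lemma qJ_re : qJ.re = 0 := rfl
@[simp] lemma qJ_imI : qJ.imI = 0 := rfl
@[simp] lemma qJ_imJ : qJ.imJ = 1 := rfl
@[simp] lemma qJ_imK : qJ.imK = 0 := rfl

open Quaternion in
lemma quat_skew (d : ℍ[ℝ]) (h : d ≠ 0) (hs : star d = -d) :
    ∃ c : ℍ[ℝ], c ≠ 0 ∧ star c * d * c = qJ := by
  have hre : d.re = 0 := Quaternion.star_eq_neg.mp hs
  set J : ℍ[ℝ] := qJ with hJ
  -- it suffices to intertwine
  have suff : ∀ (c : ℍ[ℝ]) (r : ℝ), 0 < r → c ≠ 0 → d * c = (r : ℍ[ℝ]) * (c * J) →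
      ∃ c : ℍ[ℝ], c ≠ 0 ∧ star c * d * c = J := by
    intro c r hr hc hdc
    have hn : 0 < normSq c := lt_of_le_of_ne normSq_nonneg (normSq_ne_zero.mpr hc).symm
    have hp : 0 < r * normSq c := mul_pos hr hn
    set t := (Real.sqrt (r * normSq c))⁻¹ with ht
    have ht0 : t ≠ 0 := inv_ne_zero (Real.sqrt_pos.mpr hp).ne'
    have htt : t * t * (r * normSq c) = 1 := by
      rw [ht, ← mul_inv, Real.mul_self_sqrt hp.le, inv_mul_cancel₀ hp.ne']
    refine ⟨t • c, smul_ne_zero ht0 hc, ?_⟩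
    rw [Quaternion.star_smul, smul_mul_assoc, smul_mul_assoc, mul_smul_comm, smul_smul, mul_assoc,
      hdc, Quaternion.coe_mul_eq_smul, mul_smul_comm, ← mul_assoc, Quaternion.star_mul_self,
      Quaternion.coe_mul_eq_smul, smul_smul, smul_smul]
    rw [show t * t * r * normSq c = 1 by rw [mul_assoc (t * t)]; exact htt, one_smul]
  have hq : 0 < normSq d := lt_of_le_of_ne normSq_nonneg (normSq_ne_zero.mpr h).symm
  set r := Real.sqrt (normSq d) with hr
  have hr0 : 0 < r := Real.sqrt_pos.mpr hq
  have hrr : r * r = d.imI ^ 2 + d.imJ ^ 2 + d.imK ^ 2 := by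
    rw [hr, Real.mul_self_sqrt hq.le, normSq_def', hre]
    ring
  by_cases hc : (r : ℍ[ℝ]) - d * J = 0
  · -- d = - r j
    have e1 := congrArg QuaternionAlgebra.re hc
    have e2 := congrArg QuaternionAlgebra.imI hc
    have e3 := congrArg QuaternionAlgebra.imK hc
    simp [hJ] at e1 e2 e3
    refine suff qI r hr0 ?_ ?_
    · intro h0
      have := congrArg QuaternionAlgebra.imI h0
      simp at this
    · ext <;> simp [hJ, hre] <;> linarith
  · refine suff _ r hr0 hc ?_
    ext <;> simp [hJ, hre] <;> nlinarith [hrr]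

lemma Jc_unit (m : ℕ) : IsUnit (Jc m) :=
  IsUnit.of_mul_eq_one (-Jc m) (by rw [mul_neg, Jc_sq, neg_neg])

lemma isUnit_form {ι : Type} [Fintype ι] [DecidableEq ι] {g K : Matrix ι ι ℂ} (hg : IsUnit g)
    (hK : IsUnit K) : IsUnit (gᵀ * K * g) :=
  (((isUnit_transpose _).mpr hg).mul hK).mul hg

/-- Conjugation-descent to real forms: any subgroup of `O(N,ℂ)` (resp. `Sp(m,ℂ)`)
consisting, after conjugation by `g`, of real (resp. quaternionic) matrices can be
conjugated into `O(p,q)`, `Sp(m,ℝ)`, `O*(2m)` or `Sp(r,s)` respectively. -/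
theorem conjugate_into_real_forms (N m : ℕ) (hN : 1 ≤ N) (hm : 1 ≤ m) :
    -- (1) real ∩ O(N,ℂ) up to conjugacy lands in O(p,q)
    (∀ g : Matrix (Fin N) (Fin N) ℂ, IsUnit g →
      ∃ p q, p + q = N ∧ ∃ h : Matrix (Fin N) (Fin N) ℂ, IsUnit h ∧
        ∀ x : Matrix (Fin N) (Fin N) ℂ, IsRealMat x → IsUnit x →
          MemOC (g * x * g⁻¹) → MemOpq N p (h⁻¹ * x * h)) ∧
    -- (2) real ∩ Sp(m,ℂ) up to conjugacy lands in Sp(m,ℝ)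
    (∀ g : Matrix (Fin m ⊕ Fin m) (Fin m ⊕ Fin m) ℂ, IsUnit g →
      ∃ h : Matrix (Fin m ⊕ Fin m) (Fin m ⊕ Fin m) ℂ, IsUnit h ∧
        ∀ x : Matrix (Fin m ⊕ Fin m) (Fin m ⊕ Fin m) ℂ, IsRealMat x → IsUnit x →
          MemSpC m (g * x * g⁻¹) → MemSpR m (h⁻¹ * x * h)) ∧
    -- (3) quaternionic ∩ O(2m,ℂ) up to conjugacy lands in O*(2m)
    (∀ g : Matrix (Fin m ⊕ Fin m) (Fin m ⊕ Fin m) ℂ, IsUnit g →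
      ∃ h : Matrix (Fin m ⊕ Fin m) (Fin m ⊕ Fin m) ℂ, IsUnit h ∧
        ∀ x : Matrix (Fin m ⊕ Fin m) (Fin m ⊕ Fin m) ℂ, IsQuatMat m x → IsUnit x →
          MemOC (g * x * g⁻¹) → MemOstar m (h⁻¹ * x * h)) ∧
    -- (4) quaternionic ∩ Sp(m,ℂ) up to conjugacy lands in Sp(r,s)
    (∀ g : Matrix (Fin m ⊕ Fin m) (Fin m ⊕ Fin m) ℂ, IsUnit g →
      ∃ r s, r + s = m ∧ ∃ h : Matrix (Fin m ⊕ Fin m) (Fin m ⊕ Fin m) ℂ, IsUnit h ∧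
        ∀ x : Matrix (Fin m ⊕ Fin m) (Fin m ⊕ Fin m) ℂ, IsQuatMat m x → IsUnit x →
          MemSpC m (g * x * g⁻¹) → MemSpRS m r (h⁻¹ * x * h)) := by
  refine ⟨?_, ?_, ?_, ?_⟩
  · intro g hg
    obtain ⟨T, hTu, hTt, hTx⟩ := real_descent 1 (gᵀ * 1 * g) (isUnit_form hg isUnit_one) (by simp)
    obtain ⟨p, q, hpq, P, hP, hPT⟩ := diag_sorted (D := ℝ) two_ne_zero
      (fun d hd _ => real_scale d hd) N T (by rw [conjTranspose_eq_transpose_of_trivial]; simpa using hTt) hTu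
    refine ⟨p, q, hpq, P.map Complex.ofRealHom, isUnit_map_real hP, fun x hx _ hmem => ⟨real_conj hx hP, ?_⟩⟩
    refine pres_conj transpose (fun a b => transpose_mul a b) (isUnit_map_real hP) ?_
      (hTx x hx (pres_of_conj hg (by simpa [MemOC] using hmem)))
    rw [conjTranspose_eq_transpose_of_trivial] at hPT
    rw [← Matrix.transpose_map, ← Matrix.map_mul, ← Matrix.map_mul, hPT, Ipq,
      Matrix.diagonal_map (by simp)]
    congr 1
    ext k
    by_cases hk : (k : ℕ) < p <;> simp [hk] <;> try rfl
  · intro g hg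
    obtain ⟨T, hTu, hTt, hTx⟩ := real_descent (-1) (gᵀ * Jc m * g) (isUnit_form hg (Jc_unit m)) (by
      rw [transpose_mul, transpose_mul, Jc_T]; simp [Matrix.mul_assoc])
    obtain ⟨P, hP, hPT⟩ := sympl_mat m T (by simpa using hTt) hTu
    refine ⟨P.map Complex.ofRealHom, isUnit_map_real hP, fun x hx _ hmem => ⟨real_conj hx hP, ?_⟩⟩
    refine pres_conj transpose (fun a b => transpose_mul a b) (isUnit_map_real hP) ?_
      (hTx x hx (pres_of_conj hg hmem))
    rw [← Matrix.transpose_map, ← Matrix.map_mul, ← Matrix.map_mul, hPT, Jc, fromBlocks_map]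
    congr 1
    all_goals first | (simp; done) | (rw [Matrix.map_neg _ (map_neg _)]; simp)
  · intro g hg
    obtain ⟨T, hTu, hTt, hTx⟩ := quat_descent 1 (gᵀ * 1 * g) (isUnit_form hg isUnit_one) (by simp)
    have hTH : Tᴴ = (-1 : ℤ) • T := by
      apply Phi_inj
      rw [Phi_star, hTt]; simp [Phi_neg]
    obtain ⟨P, hP, d, hd, hPT⟩ := diag_norm (D := Quaternion ℝ) (-1) (by simp)
      ⟨qJ, by
        intro h0
        have := congrArg QuaternionAlgebra.imJ h0
        simp at this
        norm_num at this
        have h3 : (2 : ℝ) = 0 := this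
        norm_num at h3⟩ (fun d => d = qJ)
      (fun d h1 h2 => quat_skew d h1 (by simpa using h2)) T hTH hTu
    refine ⟨Phi P, isUnit_Phi hP, fun x hx _ hmem =>
      ⟨quat_conj hx (IsQuatMat_Phi P) (isUnit_Phi hP), ?_⟩⟩
    refine pres_conj conjTranspose (fun a b => conjTranspose_mul a b) (isUnit_Phi hP) ?_
      (hTx x hx (pres_of_conj hg (by simpa [MemOC] using hmem)))
    rw [← Phi_star, ← Phi_mul, ← Phi_mul, hPT, Phi_diagonal, Jc, ← diagonal_one, ← diagonal_zero,
      diagonal_neg]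
    simp only [hd]
    congr 1 <;>
    · congr 1; ext k; apply Complex.ext <;> simp
  · intro g hg
    obtain ⟨T, hTu, hTt, hTx⟩ := quat_descent (-1) (gᵀ * Jc m * g) (isUnit_form hg (Jc_unit m)) (by
      rw [transpose_mul, transpose_mul, Jc_T]; simp [Matrix.mul_assoc])
    have hTH : Tᴴ = T := by
      apply Phi_inj
      rw [Phi_star, hTt]; simp
    obtain ⟨p, q, hpq, P, hP, hPT⟩ := diag_sorted (D := Quaternion ℝ) (fun h0 => by
      have := congrArg QuaternionAlgebra.re h0
      rw [← one_add_one_eq_two] at this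
      have h3 : (1 : ℝ) + 1 = 0 := this
      norm_num at h3)
      quat_scale m T hTH hTu
    refine ⟨p, q, hpq, Phi P, isUnit_Phi hP, fun x hx _ hmem =>
      ⟨quat_conj hx (IsQuatMat_Phi P) (isUnit_Phi hP), ?_⟩⟩
    refine pres_conj conjTranspose (fun a b => conjTranspose_mul a b) (isUnit_Phi hP) ?_
      (hTx x hx (pres_of_conj hg hmem))
    rw [← Phi_star, ← Phi_mul, ← Phi_mul, hPT, Phi_diagonal, Ipq, ← diagonal_zero]
    congr 1 <;>
    · congr 1; ext k; apply Complex.ext <;> by_cases hk : (k : ℕ) < p <;> simp [hk] <;> try rfl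
end

section
/- Let N ≥ 1 and let G be a subgroup of GL(N,ℂ). The following are equivalent: (1) there exist p, q ∈ ℕ with p + q = N and an invertible c ∈ M(N,ℂ) such that c g c⁻¹ ∈ U(p,q) for every g ∈ G, where U(p,q) := {x ∈ M(N,ℂ) : xᴴ I_{p,q} x = I_{p,q}}; (2) there exists an invertible matrix h ∈ M(N,ℂ) such that gᴴ h g = h for every g ∈ G. Moreover, in proving (2) ⇒ (1) one may take h Hermitian: if some invertible h satisfies gᴴ h g = h for all g ∈ G, then some invertible Hermitian h' satisfies gᴴ h' g = h' for all g ∈ G. -/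
open Matrix

lemma aux_herm {N : ℕ} (h : Matrix (Fin N) (Fin N) ℂ) (hu : IsUnit h) :
    ∃ z : ℂ, IsUnit (z • h + (star z) • hᴴ) := by
  let A := h + hᴴ
  let B := Complex.I • (h - hᴴ)
  let P : Polynomial ℂ := (A.map Polynomial.C + (Polynomial.X : Polynomial ℂ) • B.map Polynomial.C).det
  have hev : ∀ t : ℂ, P.eval t = (A + t • B).det := by
    intro t
    have := RingHom.map_det (Polynomial.evalRingHom t)
      (A.map Polynomial.C + (Polynomial.X : Polynomial ℂ) • B.map Polynomial.C)
    rw [Polynomial.coe_evalRingHom] at this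
    rw [this]
    congr 1
    ext i j
    simp
    exact mul_comm _ _
  have hP : P ≠ 0 := by
    intro h0
    have h1 := hev (-Complex.I)
    have h2 : A + (-Complex.I) • B = (2 : ℂ) • h := by
      simp only [A, B, smul_smul]
      rw [neg_mul, Complex.I_mul_I, neg_neg, one_smul, two_smul]
      abel
    rw [h0, h2, det_smul, Polynomial.eval_zero] at h1
    have := ((isUnit_iff_isUnit_det _).1 hu).ne_zero
    have h3 := mul_ne_zero (pow_ne_zero (Fintype.card (Fin N)) (two_ne_zero (α := ℂ))) this
    exact h3 h1.symm
  have hex : ∃ t : ℝ, P.eval (t : ℂ) ≠ 0 := by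
    by_contra! hc
    apply hP
    apply Polynomial.eq_zero_of_infinite_isRoot
    refine Set.Infinite.mono ?_ (Set.infinite_range_of_injective Complex.ofReal_injective)
    rintro _ ⟨t, rfl⟩
    exact hc t
  obtain ⟨t, ht⟩ := hex
  refine ⟨1 + t * Complex.I, ?_⟩
  rw [isUnit_iff_isUnit_det, isUnit_iff_ne_zero]
  rw [hev] at ht
  convert ht using 2
  ext i j
  simp [A, B]
  ring

lemma aux_sylv {N : ℕ} (h : Matrix (Fin N) (Fin N) ℂ) (hu : IsUnit h) (hh : hᴴ = h) :
    ∃ p q, p + q = N ∧ ∃ c : Matrix (Fin N) (Fin N) ℂ, IsUnit c ∧ cᴴ * Ipq N p * c = h := by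
  have hH : h.IsHermitian := hh
  let d := hH.eigenvalues
  let p := Fintype.card {k // 0 < d k}
  have hp : p ≤ N := by simpa using Fintype.card_subtype_le (fun k => 0 < d k)
  have hcard : Fintype.card {k : Fin N // (k : ℕ) < p} = Fintype.card {k // 0 < d k} := by
    change _ = p
    rw [Fintype.card_subtype, Fin.card_filter_val_lt, min_eq_right hp]
  let e := Fintype.equivOfCardEq hcard
  let σ : Equiv.Perm (Fin N) := e.extendSubtype
  let s : Fin N → ℂ := fun k => if 0 < d k then 1 else -1
  have hI : Ipq N p = (diagonal s).submatrix σ σ := by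
    rw [submatrix_diagonal_equiv]
    unfold Ipq
    congr 1
    funext k
    by_cases hk : (k : ℕ) < p
    · have : 0 < d (σ k) := e.extendSubtype_mem k hk
      simp [s, hk, this]
    · have : ¬ 0 < d (σ k) := e.extendSubtype_not_mem k hk
      simp [s, hk, this]
  let U : Matrix (Fin N) (Fin N) ℂ := hH.eigenvectorUnitary
  let R : Matrix (Fin N) (Fin N) ℂ := diagonal fun k => ((Real.sqrt |d k| : ℝ) : ℂ)
  let W := R * Uᴴ
  have hspec : h = U * diagonal (fun k => (d k : ℂ)) * Uᴴ := by
    have := hH.spectral_theorem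
    rw [Unitary.conjStarAlgAut_apply] at this
    exact this
  have hRR : Rᴴ * diagonal s * R = diagonal (fun k => (d k : ℂ)) := by
    simp only [R, diagonal_conjTranspose, diagonal_mul_diagonal]
    congr 1
    funext k
    have h1 : Real.sqrt |d k| * Real.sqrt |d k| = |d k| := Real.mul_self_sqrt (abs_nonneg _)
    have h2 : ((Real.sqrt |d k| : ℝ) : ℂ) * ((Real.sqrt |d k| : ℝ) : ℂ) = ((|d k| : ℝ) : ℂ) := by
      rw [← Complex.ofReal_mul, h1]
    simp only [Pi.star_apply, RCLike.star_def, Complex.conj_ofReal, s]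
    split_ifs with hk
    · rw [mul_one, h2, abs_of_pos hk]
    · rw [mul_neg_one, neg_mul, h2, abs_of_nonpos (not_lt.1 hk)]; simp
  have hc : (W.submatrix σ id)ᴴ * Ipq N p * (W.submatrix σ id) = h := by
    rw [hI, conjTranspose_submatrix, submatrix_mul_equiv, submatrix_mul_equiv, submatrix_id_id,
      hspec, ← hRR]
    simp only [W, conjTranspose_mul, conjTranspose_conjTranspose, Matrix.mul_assoc]
  refine ⟨p, N - p, by omega, W.submatrix σ id, ?_, hc⟩
  rw [isUnit_iff_isUnit_det] at hu ⊢
  rw [← hc, det_mul] at hu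
  exact isUnit_of_mul_isUnit_right hu

lemma aux_Ipq {N p : ℕ} : IsUnit (Ipq N p) := by
  apply IsUnit.of_mul_eq_one (Ipq N p)
  unfold Ipq
  rw [diagonal_mul_diagonal, ← diagonal_one]
  congr 1
  funext k
  split_ifs <;> simp

lemma aux_moreover {N : ℕ} (G : Subgroup (GL (Fin N) ℂ)) :
    ((∃ h : Matrix (Fin N) (Fin N) ℂ, IsUnit h ∧
        ∀ g ∈ G,
          (g : Matrix (Fin N) (Fin N) ℂ)ᴴ * h * (g : Matrix (Fin N) (Fin N) ℂ) = h) →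
      ∃ h' : Matrix (Fin N) (Fin N) ℂ, IsUnit h' ∧ h'ᴴ = h' ∧
        ∀ g ∈ G,
          (g : Matrix (Fin N) (Fin N) ℂ)ᴴ * h' * (g : Matrix (Fin N) (Fin N) ℂ) = h') := by
  rintro ⟨h, hu, hg⟩
  obtain ⟨z, hz⟩ := aux_herm h hu
  refine ⟨_, hz, ?_, ?_⟩
  · simp [conjTranspose_add, conjTranspose_smul, add_comm]
  · intro g hG
    have h1 := hg g hG
    have h2 := congrArg conjTranspose h1
    simp only [conjTranspose_mul, conjTranspose_conjTranspose, ← Matrix.mul_assoc] at h2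
    rw [Matrix.mul_add, Matrix.add_mul, Matrix.mul_smul, Matrix.smul_mul, h1,
      Matrix.mul_smul, Matrix.smul_mul, h2]

/-- A subgroup `G` of `GL(N,ℂ)` is conjugate into some `U(p,q)` iff it leaves
invariant some nondegenerate sesquilinear form, i.e. `gᴴ h g = h` for an invertible
`h`; moreover such an `h` may then be chosen Hermitian. -/
theorem conjugate_into_Upq_iff (N : ℕ) (hN : 1 ≤ N)
    (G : Subgroup (GL (Fin N) ℂ)) :
    ((∃ p q, p + q = N ∧ ∃ c : Matrix (Fin N) (Fin N) ℂ, IsUnit c ∧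
        ∀ g ∈ G,
          (c * (g : Matrix (Fin N) (Fin N) ℂ) * c⁻¹)ᴴ * Ipq N p *
            (c * (g : Matrix (Fin N) (Fin N) ℂ) * c⁻¹) = Ipq N p) ↔
      (∃ h : Matrix (Fin N) (Fin N) ℂ, IsUnit h ∧
        ∀ g ∈ G,
          (g : Matrix (Fin N) (Fin N) ℂ)ᴴ * h * (g : Matrix (Fin N) (Fin N) ℂ) = h)) ∧
    ((∃ h : Matrix (Fin N) (Fin N) ℂ, IsUnit h ∧
        ∀ g ∈ G,
          (g : Matrix (Fin N) (Fin N) ℂ)ᴴ * h * (g : Matrix (Fin N) (Fin N) ℂ) = h) →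
      ∃ h' : Matrix (Fin N) (Fin N) ℂ, IsUnit h' ∧ h'ᴴ = h' ∧
        ∀ g ∈ G,
          (g : Matrix (Fin N) (Fin N) ℂ)ᴴ * h' * (g : Matrix (Fin N) (Fin N) ℂ) = h') := by
  refine ⟨⟨?_, ?_⟩, aux_moreover G⟩
  · rintro ⟨p, q, -, c, hc, hg⟩
    have hd := (isUnit_iff_isUnit_det _).1 hc
    refine ⟨cᴴ * Ipq N p * c, ?_, ?_⟩
    · refine (IsUnit.mul ?_ aux_Ipq).mul hc
      exact hc.star
    · intro g hG
      have h1 := hg g hG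
      have hx : c * (g : Matrix (Fin N) (Fin N) ℂ) * c⁻¹ * c = c * g := by
        rw [Matrix.mul_assoc, nonsing_inv_mul _ hd, Matrix.mul_one]
      generalize c * (g : Matrix (Fin N) (Fin N) ℂ) * c⁻¹ = x at h1 hx
      calc (g : Matrix (Fin N) (Fin N) ℂ)ᴴ * (cᴴ * Ipq N p * c) * g
          = (c * (g : Matrix (Fin N) (Fin N) ℂ))ᴴ * Ipq N p * (c * (g : Matrix (Fin N) (Fin N) ℂ)) := by
            simp only [conjTranspose_mul, Matrix.mul_assoc]
        _ = cᴴ * (xᴴ * Ipq N p * x) * c := by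
            rw [← hx]; simp only [conjTranspose_mul, Matrix.mul_assoc]
        _ = _ := by rw [h1]
  · intro hex
    obtain ⟨h, hu, hh, hg⟩ := aux_moreover G hex
    obtain ⟨p, q, hpq, c, hc, hch⟩ := aux_sylv h hu hh
    refine ⟨p, q, hpq, c, hc, ?_⟩
    intro g hG
    have hd := (isUnit_iff_isUnit_det _).1 hc
    have h1 := hg g hG
    have hcc : c * c⁻¹ = 1 := mul_nonsing_inv _ hd
    have hcc' : (c⁻¹)ᴴ * cᴴ = 1 := by rw [← conjTranspose_mul, hcc, conjTranspose_one]
    calc _ = (c⁻¹)ᴴ * ((g : Matrix (Fin N) (Fin N) ℂ)ᴴ * (cᴴ * Ipq N p * c) * g) * c⁻¹ := by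
            simp only [conjTranspose_mul, Matrix.mul_assoc]
      _ = ((c⁻¹)ᴴ * cᴴ) * Ipq N p * (c * c⁻¹) := by
            rw [hch, h1, ← hch]; simp only [Matrix.mul_assoc]
      _ = _ := by rw [hcc, hcc', Matrix.one_mul, Matrix.mul_one]
end
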